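/- arXiv:1607.06189 — 2 statements merged into one kernel-verified Lean document; each statement's English description precedes it below -/
import Mathlib

section
/- Let (R, m, k) be a Gorenstein local ring (a Noetherian local ring of finite injective dimension as a module over itself) with an isolated singularity. If Ex(CM(R)) = AR(CM(R)), then R is of finite CM type, i.e., there are only finitely many isomorphism classes of indecomposable Cohen–Macaulay R-modules. -/
/-!
Common definitions: Cohen-Macaulay modules, isolated singularities, stable Hom,
syzygies, transposes, Auslander-Reiten sequences, and the Grothendieck-type groups
`G(CM(R))`, `Ex(CM(R))`, `AR(CM(R))` from the paper
"Syzygies of Cohen-Macaulay modules and Grothendieck groups".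

Throughout, the maximal ideal of a local ring is realized as the Jacobson radical
`(⊥ : Ideal R).jacobson` (for a local ring these coincide), which lets the definitions
make sense without a `IsLocalRing` instance argument.
-/

namespace Paper

/-- A regular local ring: a Noetherian local ring whose maximal ideal (= Jacobson radical
of `⊥`) can be generated by `dim A` elements. -/
def IsRegularLocalRing (A : Type) [CommRing A] : Prop :=
  IsNoetherianRing A ∧ IsLocalRing A ∧
    ∃ s : Finset A, Ideal.span (s : Set A) = (⊥ : Ideal A).jacobson ∧
      (s.card : WithBot ℕ∞) = ringKrullDim A

/-- `M` is a (maximal) Cohen-Macaulay `R`-module: it is finitely generated, and it is either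
zero or satisfies `depth M = dim R`, the latter being expressed by the existence of a weakly
`M`-regular sequence of length `dim R` consisting of elements of the maximal ideal
(equivalently, since `depth M ≤ dim R` always holds for nonzero finitely generated `M` over a
Noetherian local ring `R`). -/
def IsMCM (R : Type) [CommRing R] (M : Type) [AddCommGroup M] [Module R M] : Prop :=
  Module.Finite R M ∧ (Subsingleton M ∨
    ∃ rs : List R, (∀ x ∈ rs, x ∈ (⊥ : Ideal R).jacobson) ∧
      RingTheory.Sequence.IsWeaklyRegular M rs ∧
      (rs.length : WithBot ℕ∞) = ringKrullDim R)

/-- The local ring `R` has an isolated singularity: `R_p` is regular local for every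
prime `p` different from the maximal ideal. -/
def IsolatedSingularity (R : Type) [CommRing R] : Prop :=
  ∀ (p : Ideal R) (_ : p.IsPrime), p ≠ (⊥ : Ideal R).jacobson →
    IsRegularLocalRing (Localization p.primeCompl)

section StableHom

variable (R : Type) [CommRing R]

/-- The submodule of `Hom_R(M,N)` consisting of homomorphisms factoring through a
finitely generated free module. -/
def stSub (M N : Type) [AddCommGroup M] [Module R M] [AddCommGroup N] [Module R N] :
    Submodule R (M →ₗ[R] N) :=
  Submodule.span R {f | ∃ (n : ℕ) (g : M →ₗ[R] (Fin n → R)) (h : (Fin n → R) →ₗ[R] N),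
    f = h ∘ₗ g}

/-- The stable Hom module `stHom_R(M,N) = Hom_R(M,N)/{maps factoring through f.g. frees}`. -/
abbrev StHom (M N : Type) [AddCommGroup M] [Module R M] [AddCommGroup N] [Module R N] :=
  (M →ₗ[R] N) ⧸ stSub R M N

/-- The map `stHom_R(M,N) → stHom_R(M,N')` induced by postcomposition with `φ : N →ₗ[R] N'`. -/
def stMapLeft {M N N' : Type} [AddCommGroup M] [Module R M] [AddCommGroup N] [Module R N]
    [AddCommGroup N'] [Module R N'] (φ : N →ₗ[R] N') : StHom R M N →ₗ[R] StHom R M N' :=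
  Submodule.mapQ _ _ (LinearMap.llcomp R M N N' φ) (by
    rw [stSub, Submodule.span_le]
    rintro f ⟨n, g, h, rfl⟩
    exact Submodule.subset_span ⟨n, g, φ ∘ₗ h, rfl⟩)

/-- The map `stHom_R(M,N) → stHom_R(M',N)` induced by precomposition with `φ : M' →ₗ[R] M`. -/
def stMapRight {M M' N : Type} [AddCommGroup M] [Module R M] [AddCommGroup M'] [Module R M']
    [AddCommGroup N] [Module R N] (φ : M' →ₗ[R] M) : StHom R M N →ₗ[R] StHom R M' N :=
  Submodule.mapQ _ _ (LinearMap.lcomp R N φ) (by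
    rw [stSub, Submodule.span_le]
    rintro f ⟨n, g, h, rfl⟩
    exact Submodule.subset_span ⟨n, g ∘ₗ φ, h, rfl⟩)

end StableHom

section Syzygies

variable (R : Type) [CommRing R]

/-- `S` is (isomorphic to) a first syzygy of `M`: the kernel of a minimal free cover
`π : R^n → M` (minimality: `ker π ⊆ m·R^n`). -/
def IsSyzygyOf (S M : Type) [AddCommGroup S] [Module R S] [AddCommGroup M] [Module R M] :
    Prop :=
  ∃ (n : ℕ) (π : (Fin n → R) →ₗ[R] M), Function.Surjective π ∧
    LinearMap.ker π ≤ (⊥ : Ideal R).jacobson • (⊤ : Submodule R (Fin n → R)) ∧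
    Nonempty (S ≃ₗ[R] LinearMap.ker π)

/-- `S` belongs to `ΩCM(R)`: it is a first syzygy of some Cohen-Macaulay module. -/
def MemOmegaCM (S : Type) [AddCommGroup S] [Module R S] : Prop :=
  ∃ N : ModuleCat.{0} R, IsMCM R N ∧ IsSyzygyOf R S N

/-- `M` has a nonzero free direct summand. -/
def HasFreeSummand (M : Type) [AddCommGroup M] [Module R M] : Prop :=
  ∃ P : ModuleCat.{0} R, Nonempty (M ≃ₗ[R] (P × R))

/-- `M'` is the non-free part of `M`: it has no nonzero free direct summand and
`M ≅ M' ⊕ R^a` for some `a ≥ 0`. -/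
def IsNonfreePart (M M' : Type) [AddCommGroup M] [Module R M] [AddCommGroup M'] [Module R M'] :
    Prop :=
  ¬ HasFreeSummand R M' ∧ ∃ a : ℕ, Nonempty (M ≃ₗ[R] (M' × (Fin a → R)))

/-- `M` is an indecomposable module: nonzero, and in any decomposition `M ≅ P × Q`
one factor vanishes. -/
def Indecomp (M : Type) [AddCommGroup M] [Module R M] : Prop :=
  ¬ Subsingleton M ∧ ∀ (P Q : ModuleCat.{0} R), Nonempty (M ≃ₗ[R] (P × Q)) →
    Subsingleton P ∨ Subsingleton Q

/-- `A` is a direct summand of `B`. -/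
def IsSummandOf (A B : Type) [AddCommGroup A] [Module R A] [AddCommGroup B] [Module R B] :
    Prop :=
  ∃ C : ModuleCat.{0} R, Nonempty (B ≃ₗ[R] (A × C))

/-- A linear map is a split epimorphism if it has a right inverse. -/
def IsSplitEpi {M N : Type} [AddCommGroup M] [Module R M] [AddCommGroup N] [Module R N]
    (g : M →ₗ[R] N) : Prop :=
  ∃ s : N →ₗ[R] M, g ∘ₗ s = LinearMap.id

/-- `0 → A → B → C → 0` (given by `f`, `g`) is an Auslander-Reiten sequence: a non-split
short exact sequence of finitely generated modules with `A`, `C` indecomposable non-free,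
such that every non-split-epi map `X → C` from a finitely generated module factors
through `g : B → C`. -/
def IsARSequence {A B C : Type} [AddCommGroup A] [Module R A] [AddCommGroup B] [Module R B]
    [AddCommGroup C] [Module R C] (f : A →ₗ[R] B) (g : B →ₗ[R] C) : Prop :=
  Module.Finite R A ∧ Module.Finite R B ∧ Module.Finite R C ∧
  Function.Injective f ∧ Function.Surjective g ∧ Function.Exact f g ∧
  ¬ IsSplitEpi R g ∧
  Indecomp R A ∧ ¬ Module.Free R A ∧ Indecomp R C ∧ ¬ Module.Free R C ∧
  ∀ (X : ModuleCat.{0} R) (h : (X : Type) →ₗ[R] C), Module.Finite R X → ¬ IsSplitEpi R h →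
    ∃ l : (X : Type) →ₗ[R] B, g ∘ₗ l = h

/-- `R` is of finite CM type: finitely many isomorphism classes of indecomposable
Cohen-Macaulay modules. -/
def FiniteCMType : Prop :=
  ∃ L : List (ModuleCat.{0} R), ∀ U : ModuleCat.{0} R, IsMCM R U → Indecomp R U →
    ∃ V ∈ L, Nonempty ((U : Type) ≃ₗ[R] (V : Type))

/-- `R` is of finite ΩCM type: finitely many isomorphism classes of indecomposable
modules in `ΩCM(R)`. -/
def FiniteOmegaCMType : Prop :=
  ∃ L : List (ModuleCat.{0} R), ∀ U : ModuleCat.{0} R, Module.Finite R U → Indecomp R U →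
    MemOmegaCM R U → ∃ V ∈ L, Nonempty ((U : Type) ≃ₗ[R] (V : Type))

/-- There are only finitely many isomorphism classes of indecomposable direct summands of
first syzygies of Cohen-Macaulay `R`-modules. -/
def FiniteSyzygySummandType : Prop :=
  ∃ L : List (ModuleCat.{0} R), ∀ U : ModuleCat.{0} R, Module.Finite R U → Indecomp R U →
    (∃ S : ModuleCat.{0} R, MemOmegaCM R S ∧ IsSummandOf R (U : Type) S) →
    ∃ V ∈ L, Nonempty ((U : Type) ≃ₗ[R] (V : Type))

end Syzygies

section Grothendieck

variable (R : Type) [CommRing R]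

/-- The Cohen-Macaulay `R`-modules, as objects of `ModuleCat R`. -/
def CMMod := {M : ModuleCat.{0} R // IsMCM R M}

/-- The relations `[X] + [Z] - [Y]` with `Y ≅ X ⊕ Z`, defining `G(CM(R))` as a quotient
of the free abelian group on the Cohen-Macaulay modules. -/
def GRel : AddSubgroup (FreeAbelianGroup (CMMod R)) :=
  AddSubgroup.closure {a | ∃ X Z Y : CMMod R,
    Nonempty ((Y.1 : Type) ≃ₗ[R] ((X.1 : Type) × (Z.1 : Type))) ∧
    a = FreeAbelianGroup.of X + FreeAbelianGroup.of Z - FreeAbelianGroup.of Y}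

/-- The group `G(CM(R))`: the free abelian group on the isomorphism classes of
Cohen-Macaulay `R`-modules (realized as the free abelian group on all Cohen-Macaulay
modules modulo the direct sum relations). -/
abbrev GCM := FreeAbelianGroup (CMMod R) ⧸ GRel R

/-- The class of an element of the free abelian group in `G(CM(R))`. -/
def gcls : FreeAbelianGroup (CMMod R) →+ GCM R := QuotientAddGroup.mk' _

/-- The subgroup `Ex(CM(R))` of `G(CM(R))` generated by `[X]+[Z]-[Y]` coming from short
exact sequences `0 → Z → Y → X → 0` of Cohen-Macaulay modules. -/
def ExCM : AddSubgroup (GCM R) :=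
  AddSubgroup.closure {x | ∃ (X Z Y : CMMod R) (f : (Z.1 : Type) →ₗ[R] (Y.1 : Type))
    (g : (Y.1 : Type) →ₗ[R] (X.1 : Type)), Function.Injective f ∧ Function.Surjective g ∧
    Function.Exact f g ∧
    x = gcls R (FreeAbelianGroup.of X + FreeAbelianGroup.of Z - FreeAbelianGroup.of Y)}

/-- The subgroup `AR(CM(R))` of `G(CM(R))` generated by `[X]+[Z]-[Y]` coming from
Auslander-Reiten sequences `0 → Z → Y → X → 0` of Cohen-Macaulay modules. -/
def ARCM : AddSubgroup (GCM R) :=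
  AddSubgroup.closure {x | ∃ (X Z Y : CMMod R) (f : (Z.1 : Type) →ₗ[R] (Y.1 : Type))
    (g : (Y.1 : Type) →ₗ[R] (X.1 : Type)), IsARSequence R f g ∧
    x = gcls R (FreeAbelianGroup.of X + FreeAbelianGroup.of Z - FreeAbelianGroup.of Y)}

/-- The image of a subgroup `H ≤ G(CM(R))` in `G(CM(R)) ⊗_ℤ ℚ`: the `ℚ`-subspace spanned by
the image of `H`. The equality `ratSpan R (ExCM R) = ratSpan R (ARCM R)` expresses
`Ex(CM(R)) ⊗_ℤ ℚ = AR(CM(R)) ⊗_ℤ ℚ` inside `G(CM(R)) ⊗_ℤ ℚ`. -/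
def ratSpan (H : AddSubgroup (GCM R)) : Submodule ℚ (TensorProduct ℤ ℚ (GCM R)) :=
  Submodule.span ℚ {x | ∃ g ∈ H, x = (1 : ℚ) ⊗ₜ[ℤ] g}

end Grothendieck

section Transpose

variable (R : Type) [CommRing R]

/-- The data of a minimal free presentation `R^{n1} --d--> R^{n0} --p--> M → 0`. -/
structure PresData (M : Type) [AddCommGroup M] [Module R M] where
  n1 : ℕ
  n0 : ℕ
  d : (Fin n1 → R) →ₗ[R] (Fin n0 → R)
  p : (Fin n0 → R) →ₗ[R] M
  surj : Function.Surjective p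
  exact : LinearMap.range d = LinearMap.ker p
  min0 : LinearMap.ker p ≤ (⊥ : Ideal R).jacobson • (⊤ : Submodule R (Fin n0 → R))
  min1 : LinearMap.ker d ≤ (⊥ : Ideal R).jacobson • (⊤ : Submodule R (Fin n1 → R))

/-- The (Auslander) transpose determined by a minimal free presentation: the cokernel of
the dual map `(R^{n0})^* → (R^{n1})^*`. -/
abbrev TrOf {M : Type} [AddCommGroup M] [Module R M] (D : PresData R M) : Type :=
  Module.Dual R (Fin D.n1 → R) ⧸ LinearMap.range D.d.dualMap

/-- The data of a minimal free cover `p : R^n → M`. -/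
structure SyzData (M : Type) [AddCommGroup M] [Module R M] where
  n : ℕ
  p : (Fin n → R) →ₗ[R] M
  surj : Function.Surjective p
  min : LinearMap.ker p ≤ (⊥ : Ideal R).jacobson • (⊤ : Submodule R (Fin n → R))

/-- The first syzygy determined by a minimal free cover. -/
abbrev SyzOf {M : Type} [AddCommGroup M] [Module R M] (D : SyzData R M) : Type :=
  LinearMap.ker D.p

/-- The data needed to construct `Ω⁻¹ M = Tr Ω Tr M`. -/
structure CosyzData (M : Type) [AddCommGroup M] [Module R M] where
  P : PresData R M
  S : SyzData R (TrOf R P)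
  Q : PresData R (SyzOf R S)

/-- The cosyzygy `Ω⁻¹ M = Tr Ω Tr M` determined by the data `D`. -/
abbrev CosyzOf {M : Type} [AddCommGroup M] [Module R M] (D : CosyzData R M) : Type :=
  TrOf R D.Q

/-- The map `t : Tr M → Tr M'` represents the transpose `Tr φ` of `φ : M' → M`
(with respect to the chosen minimal presentations). -/
def RepresentsTr {M M' : Type} [AddCommGroup M] [Module R M] [AddCommGroup M'] [Module R M']
    (D : PresData R M) (D' : PresData R M') (φ : M' →ₗ[R] M)
    (t : TrOf R D →ₗ[R] TrOf R D') : Prop :=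
  ∃ (φ0 : (Fin D'.n0 → R) →ₗ[R] (Fin D.n0 → R)) (φ1 : (Fin D'.n1 → R) →ₗ[R] (Fin D.n1 → R)),
    D.p ∘ₗ φ0 = φ ∘ₗ D'.p ∧ D.d ∘ₗ φ1 = φ0 ∘ₗ D'.d ∧
    t ∘ₗ (LinearMap.range D.d.dualMap).mkQ = (LinearMap.range D'.d.dualMap).mkQ ∘ₗ φ1.dualMap

/-- The map `v : Ω Y → Ω Y'` represents the syzygy `Ω ψ` of `ψ : Y → Y'`
(with respect to the chosen minimal covers). -/
def RepresentsOmega {Y Y' : Type} [AddCommGroup Y] [Module R Y] [AddCommGroup Y'] [Module R Y']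
    (D : SyzData R Y) (D' : SyzData R Y') (ψ : Y →ₗ[R] Y')
    (v : SyzOf R D →ₗ[R] SyzOf R D') : Prop :=
  ∃ h : (Fin D.n → R) →ₗ[R] (Fin D'.n → R), D'.p ∘ₗ h = ψ ∘ₗ D.p ∧
    (LinearMap.ker D'.p).subtype ∘ₗ v = h ∘ₗ (LinearMap.ker D.p).subtype

/-- The map `w : Ω⁻¹ X' → Ω⁻¹ X` represents `Ω⁻¹ φ = Tr Ω Tr φ` for `φ : X' → X`. -/
def RepresentsOmegaInv {X X' : Type} [AddCommGroup X] [Module R X] [AddCommGroup X']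
    [Module R X'] (C : CosyzData R X) (C' : CosyzData R X') (φ : X' →ₗ[R] X)
    (w : CosyzOf R C' →ₗ[R] CosyzOf R C) : Prop :=
  ∃ (t : TrOf R C.P →ₗ[R] TrOf R C'.P) (v : SyzOf R C.S →ₗ[R] SyzOf R C'.S),
    RepresentsTr R C.P C'.P φ t ∧ RepresentsOmega R C.S C'.S t v ∧
    RepresentsTr R C'.Q C.Q v w

end Transpose

/-- `M` has injective dimension at most `n` as an `R`-module. -/
def InjDimLE (R : Type) [CommRing R] : ℕ → ModuleCat.{0} R → Prop
  | 0, M => Module.Injective R M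
  | n+1, M => ∃ (I : ModuleCat.{0} R) (f : (M : Type) →ₗ[R] (I : Type)),
      Module.Injective R I ∧ Function.Injective f ∧
      InjDimLE R n (ModuleCat.of R ((I : Type) ⧸ LinearMap.range f))

/-- A Gorenstein local ring: a Noetherian local ring of finite injective dimension as a
module over itself. -/
def IsGorensteinLocal (R : Type) [CommRing R] : Prop :=
  IsNoetherianRing R ∧ IsLocalRing R ∧ ∃ n : ℕ, InjDimLE R n (ModuleCat.of R R)

/-- The length of an `R`-module, expressed as the Krull dimension of its lattice of
submodules. -/
noncomputable def modLength (R M : Type) [CommRing R] [AddCommGroup M] [Module R M] :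
    WithBot ℕ∞ :=
  Order.krullDim (Submodule R M)

/-!
Let `k` be the residue field, `d = dim R` and `E = Ωᵈk`, a maximal Cohen–Macaulay module. The
sequence `0 → ΩE → F → E → 0` with `F` free gives an element of `Ex(CM(R)) = AR(CM(R))`, so it is a
combination of Auslander–Reiten relations whose right-hand ends lie in a finite list.

Let `U` be an indecomposable maximal Cohen–Macaulay module and `V = ΩᵈU`. Since `R` has an isolated
singularity, `Ext¹(V, -)` takes values of finite length, and its length defines a homomorphism
`G(CM(R)) → ℤ`. This homomorphism kills the Auslander–Reiten relation ending in `X` unless `X` is a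
retract of `V` or `ΩV`. Since `R` is Gorenstein, `Extⁱ(U, R) = 0` for `i > 0`, so if a nonprojective
`X` is a retract of a `j`-th syzygy of `U`, then the `j`-th minimal cosyzygy of `X` is a
nonprojective retract of `U`, hence isomorphic to `U`; only finitely many `U` arise in this way.

For every other `U` the homomorphism kills `[E] + [ΩE] - [F]`. As `Ext¹(V, F) = 0`, this forces
`Ext¹(ΩᵈU, Ωᵈk) = 0`, whence `Ext¹(U, k) = 0`, and `U ≅ R`.
-/

open CategoryTheory Abelian Limits IsLocalRing RingTheory.Sequence
open scoped Pointwise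

universe u

section ExtVanishing

universe v w

variable {C : Type u} [Category.{v} C] [Abelian C] [HasExt.{w} C]

lemma subsingleton_ext_of_iso_left {X X' Y : C} (e : X ≅ X') {n : ℕ}
    (h : Subsingleton (Ext X Y n)) : Subsingleton (Ext X' Y n) := by
  refine subsingleton_of_forall_eq 0 fun x => ?_
  rw [← Ext.mk₀_id_comp x, ← e.inv_hom_id, ← Ext.mk₀_comp_mk₀_assoc,
    h.elim ((Ext.mk₀ e.hom).comp x (zero_add n)) 0, Ext.comp_zero]

lemma subsingleton_ext_of_iso_right {X Y Y' : C} (e : Y ≅ Y') {n : ℕ}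
    (h : Subsingleton (Ext X Y n)) : Subsingleton (Ext X Y' n) := by
  refine subsingleton_of_forall_eq 0 fun x => ?_
  rw [← Ext.comp_mk₀_id x, ← e.inv_hom_id, ← Ext.mk₀_comp_mk₀,
    ← Ext.comp_assoc_of_second_deg_zero, h.elim (x.comp (Ext.mk₀ e.inv) (add_zero n)) 0,
    Ext.zero_comp]

lemma subsingleton_ext_of_isZero_left {X : C} (hX : IsZero X) (Y : C) (n : ℕ) :
    Subsingleton (Ext X Y n) :=
  subsingleton_of_forall_eq 0 fun x => by
    rw [← Ext.mk₀_id_comp x, (IsZero.iff_id_eq_zero X).mp hX, Ext.mk₀_zero, Ext.zero_comp]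

lemma subsingleton_ext_biproduct_right {X : C} {J : Type*} [Finite J] {Y : J → C}
    {c : Bicone Y} (hc : c.IsBilimit) {n : ℕ} [∀ i, Subsingleton (Ext X (Y i) n)] :
    Subsingleton (Ext X c.pt n) :=
  have := Fintype.ofFinite J
  (Ext.addEquivBiproduct X hc n).subsingleton

variable {S : ShortComplex C}

lemma subsingleton_ext_X₂_left (hS : S.ShortExact) {Y : C} {n : ℕ}
    (h₁ : Subsingleton (Ext S.X₁ Y n)) (h₃ : Subsingleton (Ext S.X₃ Y n)) :
    Subsingleton (Ext S.X₂ Y n) := by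
  refine subsingleton_of_forall_eq 0 fun x => ?_
  obtain ⟨y, rfl⟩ := Ext.contravariant_sequence_exact₂ hS Y x (h₁.elim _ _)
  rw [h₃.elim y 0, Ext.comp_zero]

lemma subsingleton_ext_X₁_left (hS : S.ShortExact) {Y : C} {n : ℕ}
    (h₂ : Subsingleton (Ext S.X₂ Y n))
    (h₃ : Subsingleton (Ext S.X₃ Y (n + 1))) : Subsingleton (Ext S.X₁ Y n) := by
  refine subsingleton_of_forall_eq 0 fun x => ?_
  obtain ⟨y, rfl⟩ := Ext.contravariant_sequence_exact₁ hS Y x (add_comm 1 n) (h₃.elim _ _)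
  rw [h₂.elim y 0, Ext.comp_zero]

lemma subsingleton_ext_X₃_left (hS : S.ShortExact) {Y : C} {n : ℕ}
    (h₁ : Subsingleton (Ext S.X₁ Y n))
    (h₂ : Subsingleton (Ext S.X₂ Y (n + 1))) : Subsingleton (Ext S.X₃ Y (n + 1)) := by
  refine subsingleton_of_forall_eq 0 fun x => ?_
  obtain ⟨y, rfl⟩ := Ext.contravariant_sequence_exact₃ hS Y x (h₂.elim _ _) (add_comm 1 n)
  rw [h₁.elim y 0, Ext.comp_zero]

lemma subsingleton_ext_X₃_right (hS : S.ShortExact) {X : C} {n : ℕ}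
    (h₂ : Subsingleton (Ext X S.X₂ n)) (h₁ : Subsingleton (Ext X S.X₁ (n + 1))) :
    Subsingleton (Ext X S.X₃ n) := by
  refine subsingleton_of_forall_eq 0 fun x => ?_
  obtain ⟨y, rfl⟩ := Ext.covariant_sequence_exact₃ X hS x rfl (h₁.elim _ _)
  rw [h₂.elim y 0, Ext.zero_comp]

lemma subsingleton_ext_X₁_right (hS : S.ShortExact) {X : C} {n : ℕ}
    (h₃ : Subsingleton (Ext X S.X₃ n))
    (h₂ : Subsingleton (Ext X S.X₂ (n + 1))) : Subsingleton (Ext X S.X₁ (n + 1)) := by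
  refine subsingleton_of_forall_eq 0 fun x => ?_
  obtain ⟨y, rfl⟩ := Ext.covariant_sequence_exact₁ X hS x (h₂.elim _ _) rfl
  rw [h₃.elim y 0, Ext.zero_comp]

lemma exists_f_comp_eq (hS : S.ShortExact) {Y : C} (h : Subsingleton (Ext S.X₃ Y 1))
    (a : S.X₁ ⟶ Y) : ∃ b : S.X₂ ⟶ Y, S.f ≫ b = a := by
  obtain ⟨y, hy⟩ := Ext.contravariant_sequence_exact₁ hS Y (Ext.mk₀ a) rfl (h.elim _ _)
  obtain ⟨b, rfl⟩ := (Ext.mk₀_bijective _ _).surjective y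
  rw [Ext.mk₀_comp_mk₀] at hy
  exact ⟨b, (Ext.mk₀_bijective _ _).injective hy⟩

end ExtVanishing

section ModuleExt

variable {R : Type u} [CommRing R]

lemma shortExact_of_injective_of_surjective_of_exact {A B C : Type u} [AddCommGroup A]
    [Module R A] [AddCommGroup B] [Module R B] [AddCommGroup C] [Module R C]
    {f : A →ₗ[R] B} {g : B →ₗ[R] C} (hf : Function.Injective f) (hg : Function.Surjective g)
    (hfg : Function.Exact f g) :
    (ModuleCat.shortComplexOfCompEqZero f g hfg.linearMap_comp_eq_zero).ShortExact :=
  ModuleCat.shortComplex_shortExact _ hfg hf hg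

lemma subsingleton_ext_free_right {X F : ModuleCat.{u} R} [Module.Finite R F] [Module.Free R F]
    {j : ℕ} (h : Subsingleton (Ext X (ModuleCat.of R R) j)) : Subsingleton (Ext X F j) := by
  let b := (Module.Free.chooseBasis R F).reindex (Fintype.equivFin _)
  let Y : Fin (Fintype.card (Module.Free.ChooseBasisIndex R F)) → ModuleCat.{u} R :=
    fun _ => ModuleCat.of R R
  let e : (⨁ Y) ≅ F := ModuleCat.biproductIsoPi Y ≪≫ b.equivFun.symm.toModuleIso
  have : ∀ i, Subsingleton (Ext X (Y i) j) := fun _ => h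
  exact subsingleton_ext_of_iso_right e
    (subsingleton_ext_biproduct_right (biproduct.isBilimit Y))

end ModuleExt

section ResidueFieldExt

variable {R : Type u} [CommRing R] [IsNoetherianRing R]

lemma subsingleton_ext_of_le_annihilator {N : ModuleCat.{u} R} {n : ℕ} {I : Ideal R}
    (hI : ∀ q : Ideal R, q.IsPrime → I ≤ q → ∀ j ≥ n,
      Subsingleton (Ext (ModuleCat.of R (R ⧸ q)) N j))
    (L : Type u) [AddCommGroup L] [Module R L] [hL : Module.Finite R L]
    (hann : I ≤ Module.annihilator R L) {j : ℕ} (hj : n ≤ j) :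
    Subsingleton (Ext (ModuleCat.of R L) N j) := by
  induction hL using IsNoetherianRing.induction_on_isQuotientEquivQuotientPrime R with
  | subsingleton L =>
    exact subsingleton_ext_of_isZero_left (ModuleCat.isZero_of_subsingleton _) _ _
  | quotient L q e =>
    refine subsingleton_ext_of_iso_left e.symm.toModuleIso (hI q.1 q.2 ?_ j hj)
    rwa [e.annihilator_eq, Ideal.annihilator_quotient] at hann
  | exact L₁ L₂ L₃ f g hf hg hfg h₁ h₃ =>
    exact subsingleton_ext_X₂_left (shortExact_of_injective_of_surjective_of_exact hf hg hfg)
      (h₁ (hann.trans (f.annihilator_le_of_injective hf)))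
      (h₃ (hann.trans (g.annihilator_le_of_surjective hg)))

variable [IsLocalRing R]

lemma subsingleton_ext_of_quotSMulTop {M N : ModuleCat.{u} R} [Module.Finite R M]
    [Module.Finite R N] {x : R} (hx : x ∈ maximalIdeal R) (reg : IsSMulRegular M x) {j : ℕ}
    (h : Subsingleton (Ext (ModuleCat.of R (QuotSMulTop x M)) N (j + 1))) :
    Subsingleton (Ext M N j) := by
  have top_le : (⊤ : Submodule R (Ext M N j)) ≤ maximalIdeal R • ⊤ := by
    intro y _
    obtain ⟨(z : Ext M N j), hz⟩ := Ext.contravariant_sequence_exact₁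
      (reg.smulShortComplex_shortExact) N y (add_comm 1 j) (h.elim _ _)
    rw [ModuleCat.smulShortComplex_f_eq_smul_id] at hz
    change (Ext.mk₀ (x • 𝟙 M)).comp z (zero_add j) = y at hz
    rw [Ext.mk₀_smul, Ext.smul_comp, Ext.mk₀_id_comp] at hz
    exact hz ▸ Submodule.smul_mem_smul hx trivial
  have top_eq_bot := Submodule.eq_bot_of_le_smul_of_le_jacobson_bot (maximalIdeal R) ⊤
    Module.Finite.fg_top top_le (maximalIdeal_le_jacobson _)
  exact (Submodule.subsingleton_iff R).mp (subsingleton_of_bot_eq_top top_eq_bot.symm)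

variable {N : ModuleCat.{u} R} [Module.Finite R N] {n : ℕ}

lemma subsingleton_ext_quotient_of_residueField
    (h : ∀ j ≥ n, Subsingleton (Ext (ModuleCat.of R (ResidueField R)) N j))
    (p : Ideal R) (hp : p.IsPrime) : ∀ j ≥ n, Subsingleton (Ext (ModuleCat.of R (R ⧸ p)) N j) := by
  induction p using IsWellFounded.induction (fun a b : Ideal R => a > b) with
  | ind p ih =>
    intro j hj
    obtain rfl | hpm := eq_or_ne p (maximalIdeal R)
    · exact h j hj
    obtain ⟨x, hxm, hxp⟩ := SetLike.exists_of_lt ((le_maximalIdeal hp.ne_top).lt_of_ne hpm)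
    have reg : IsSMulRegular (R ⧸ p) x := by
      rw [isSMulRegular_iff_right_eq_zero_of_smul]
      intro y hy
      obtain ⟨y, rfl⟩ := Ideal.Quotient.mk_surjective y
      exact Ideal.Quotient.eq_zero_iff_mem.mpr
        ((hp.mem_or_mem (Ideal.Quotient.eq_zero_iff_mem.mp hy)).resolve_left hxp)
    refine subsingleton_ext_of_quotSMulTop hxm reg
      (subsingleton_ext_of_le_annihilator (I := p ⊔ Ideal.span {x}) (n := n) ?_ _ ?_ (by omega))
    · intro q hq hpq
      exact ih q ((le_sup_left.trans hpq).lt_of_ne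
        fun e => hxp (e ▸ hpq (Ideal.mem_sup_right (Ideal.mem_span_singleton_self x)))) hq
    · rw [sup_le_iff, Ideal.span_singleton_le_iff_mem]
      exact ⟨Ideal.annihilator_quotient.ge.trans
        (LinearMap.annihilator_le_of_surjective _ (Submodule.mkQ_surjective _)),
        Module.mem_annihilator.mpr fun y => by
          obtain ⟨y, rfl⟩ := Submodule.mkQ_surjective _ y
          rw [← map_smul, Submodule.mkQ_apply, Submodule.Quotient.mk_eq_zero]
          exact Submodule.smul_mem_pointwise_smul _ _ _ trivial⟩

theorem subsingleton_ext_of_residueField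
    (h : ∀ j ≥ n, Subsingleton (Ext (ModuleCat.of R (ResidueField R)) N j))
    (L : ModuleCat.{u} R) [Module.Finite R L] {j : ℕ} (hj : n ≤ j) : Subsingleton (Ext L N j) :=
  subsingleton_ext_of_le_annihilator (I := ⊥)
    (fun q hq _ => subsingleton_ext_quotient_of_residueField h q hq) L bot_le hj

end ResidueFieldExt

section FiniteInjectiveDimension

variable {R : Type u} [CommRing R] [IsNoetherianRing R]

lemma exists_isRegular_of_forall_subsingleton_ext_self (U : ModuleCat.{u} R) [Module.Finite R U]
    [Nontrivial U] (hU : ∀ j, Subsingleton (Ext U (ModuleCat.of R R) j)) (n : ℕ) :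
    ∃ rs : List R, rs.length = n ∧ IsRegular R rs := by
  have hann : Module.annihilator R U ≠ ⊤ := Module.annihilator_eq_top_iff.not.mpr
    (not_subsingleton U)
  obtain ⟨rs, hlen, -, hrs⟩ := ModuleCat.exists_isRegular_of_exists_subsingleton_ext
    (Module.annihilator R U) n (ModuleCat.of R R) (by simpa using hann.lt_top) U
    Module.support_eq_zeroLocus fun j _ => hU j
  exact ⟨rs, hlen, hrs⟩

variable [IsLocalRing R]

lemma exists_ringKrullDim_eq_natCast (R : Type*) [CommRing R] [IsNoetherianRing R]
    [IsLocalRing R] : ∃ d : ℕ, ringKrullDim R = d :=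
  ⟨_, Order.krullDim_eq_length_of_finiteDimensionalOrder⟩

lemma length_le_ringKrullDim_of_isRegular {rs : List R} (hrs : IsRegular R rs) :
    (rs.length : WithBot ℕ∞) ≤ ringKrullDim R := by
  have : Nontrivial (R ⧸ Ideal.ofList rs) :=
    Ideal.Quotient.nontrivial_iff.mpr fun h => hrs.top_ne_smul (by simp [h])
  rw [← ringKrullDim_add_length_eq_ringKrullDim_of_isRegular rs hrs]
  exact le_add_of_nonneg_left ringKrullDim_nonneg_of_nontrivial

lemma exists_isRegular_forall_length_le (R : Type*) [CommRing R] [IsNoetherianRing R]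
    [IsLocalRing R] :
    ∃ rs : List R, IsRegular R rs ∧ ∀ rs' : List R, IsRegular R rs' → rs'.length ≤ rs.length := by
  obtain ⟨d, hd⟩ := exists_ringKrullDim_eq_natCast R
  let lengths : Set ℕ := List.length '' {rs : List R | IsRegular R rs}
  have nonempty : lengths.Nonempty := ⟨0, [], .nil R R, rfl⟩
  have bdd : BddAbove lengths := ⟨d, by
    rintro _ ⟨rs, hrs, rfl⟩
    exact_mod_cast hd ▸ length_le_ringKrullDim_of_isRegular hrs⟩
  obtain ⟨rs, hrs, hlen⟩ := Nat.sSup_mem nonempty bdd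
  exact ⟨rs, hrs, fun rs' hrs' => hlen ▸ le_csSup bdd ⟨rs', hrs', rfl⟩⟩

lemma ofList_le_maximalIdeal_of_isRegular {R : Type*} [CommRing R] [IsLocalRing R] {rs : List R}
    (hrs : IsRegular R rs) : Ideal.ofList rs ≤ maximalIdeal R :=
  le_maximalIdeal fun h => hrs.top_ne_smul (by simp [h])

lemma exists_injective_residueField_of_forall_length_le {rs : List R} (hrs : IsRegular R rs)
    (hmax : ∀ rs' : List R, IsRegular R rs' → rs'.length ≤ rs.length) :
    ∃ f : ResidueField R →ₗ[R] R ⧸ Ideal.ofList rs, Function.Injective f := by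
  have : IsSimpleModule R (ResidueField R) :=
    isSimpleModule_iff_isCoatom.mpr (Ideal.isMaximal_def.mp (maximalIdeal.isMaximal R))
  suffices ¬ Subsingleton (ResidueField R →ₗ[R] R ⧸ Ideal.ofList rs) by
    have := not_subsingleton_iff_nontrivial.mp this
    obtain ⟨f, hf⟩ := exists_ne (0 : ResidueField R →ₗ[R] R ⧸ Ideal.ofList rs)
    exact ⟨f, LinearMap.injective_of_ne_zero hf⟩
  rw [IsSMulRegular.subsingleton_linearMap_iff]
  rintro ⟨x, hx, hreg⟩
  have hxm : x ∈ maximalIdeal R := Ideal.annihilator_quotient.le hx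
  have hrsm := ofList_le_maximalIdeal_of_isRegular hrs
  have hext : IsRegular R (rs ++ [x]) := by
    refine (isRegular_iff_isWeaklyRegular_of_subset_maximalIdeal ?_).mpr
      ((isWeaklyRegular_append_iff R rs [x]).mpr ⟨hrs.1, ?_⟩)
    · simp only [List.forall_mem_append, List.forall_mem_singleton]
      exact ⟨fun r hr => hrsm (Ideal.subset_span hr), hxm⟩
    · rw [isWeaklyRegular_singleton_iff]
      exact ((Submodule.quotEquivOfEq _ _ (by simp)).isSMulRegular_congr x).mpr hreg
  simpa using hmax _ hext

lemma hasProjectiveDimensionLE_quotient_ofList {rs : List R} (hrs : IsRegular R rs) :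
    HasProjectiveDimensionLE (ModuleCat.of R (R ⧸ Ideal.ofList rs)) rs.length := by
  have := (projectiveDimension_le_iff _ _).mp
    (ModuleCat.projectiveDimension_quotient_eq_length (R := R) rs hrs).le
  exact ModuleCat.hasProjectiveDimensionLE_of_linearEquiv
    (M := ModuleCat.of R (Shrink.{u} (R ⧸ Ideal.ofList rs))) (Shrink.linearEquiv R _) rs.length

theorem subsingleton_ext_of_hasInjectiveDimensionLT {rs : List R} (hrs : IsRegular R rs)
    (hmax : ∀ rs' : List R, IsRegular R rs' → rs'.length ≤ rs.length) {N : ModuleCat.{u} R}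
    [Module.Finite R N] (n : ℕ) [HasInjectiveDimensionLT N n] (L : ModuleCat.{u} R)
    [Module.Finite R L] {j : ℕ} (hj : rs.length < j) : Subsingleton (Ext L N j) := by
  obtain ⟨k, hk⟩ : ∃ k, n ≤ j + k := ⟨n, Nat.le_add_left n j⟩
  induction k generalizing j L with
  | zero => exact HasInjectiveDimensionLT.subsingleton N n j hk L
  | succ k ih =>
    refine subsingleton_ext_of_residueField (fun i hi => ?_) L le_rfl
    obtain rfl | hi := hi.eq_or_lt
    -- `k` embeds in `R ⧸ (rs)`, which has projective dimension `rs.length`, so the vanishing in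
    -- degree `j + 1` descends to degree `j`.
    · have := hasProjectiveDimensionLE_quotient_ofList hrs
      obtain ⟨f, hf⟩ := exists_injective_residueField_of_forall_length_le hrs hmax
      exact subsingleton_ext_X₁_left
        (shortExact_of_injective_of_surjective_of_exact hf (Submodule.mkQ_surjective _)
          f.exact_map_mkQ_range)
        (HasProjectiveDimensionLT.subsingleton _ (rs.length + 1) _ hj N)
        (ih (ModuleCat.of R ((R ⧸ Ideal.ofList rs) ⧸ LinearMap.range f)) (by omega) (by omega))
    · exact ih _ (by omega) (by omega)

lemma subsingleton_ext_of_isWeaklyRegular {N : ModuleCat.{u} R} [Module.Finite R N] {t : ℕ}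
    (hN : ∀ (L : ModuleCat.{u} R) [Module.Finite R L] {j : ℕ}, t < j → Subsingleton (Ext L N j))
    {ys : List R} (hys : ∀ y ∈ ys, y ∈ maximalIdeal R) (U : ModuleCat.{u} R) [Module.Finite R U]
    (hU : IsWeaklyRegular U ys) {j : ℕ} (hj : t < j + ys.length) : Subsingleton (Ext U N j) := by
  induction ys generalizing U j with
  | nil => exact hN U hj
  | cons y ys ih =>
    rw [List.forall_mem_cons] at hys
    rw [isWeaklyRegular_cons_iff] at hU
    rw [List.length_cons] at hj
    exact subsingleton_ext_of_quotSMulTop hys.1 hU.1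
      (ih hys.2 (ModuleCat.of R (QuotSMulTop y U)) hU.2 (by omega))

end FiniteInjectiveDimension

section Gorenstein

variable {R : Type} [CommRing R]

lemma InjDimLE.hasInjectiveDimensionLT {n : ℕ} {M : ModuleCat.{0} R} (hM : InjDimLE R n M) :
    HasInjectiveDimensionLT M (n + 1) := by
  induction n generalizing M with
  | zero =>
    have : Injective M := (Module.injective_iff_injective_object R M).mp hM
    infer_instance
  | succ n ih =>
    obtain ⟨I, f, hI, hf, hM⟩ := hM
    have : Injective I := (Module.injective_iff_injective_object R I).mp hI
    exact (shortExact_of_injective_of_surjective_of_exact hf (Submodule.mkQ_surjective _)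
      f.exact_map_mkQ_range).hasInjectiveDimensionLT_X₁ (n + 1) (ih hM)
      (hasInjectiveDimensionLT_of_ge I 1 _ (by omega))

variable [IsLocalRing R]

lemma jacobson_bot_eq_maximalIdeal : (⊥ : Ideal R).jacobson = maximalIdeal R :=
  jacobson_eq_maximalIdeal _ bot_ne_top

lemma IsMCM.exists_isWeaklyRegular {U : Type} [AddCommGroup U] [Module R U] [Nontrivial U]
    (hU : IsMCM R U) {d : ℕ} (hd : ringKrullDim R = d) :
    ∃ ys : List R, (∀ y ∈ ys, y ∈ maximalIdeal R) ∧ IsWeaklyRegular U ys ∧ ys.length = d := by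
  obtain ⟨ys, hys, hreg, hlen⟩ := hU.2.resolve_left (not_subsingleton U)
  rw [jacobson_bot_eq_maximalIdeal] at hys
  exact ⟨ys, hys, hreg, by exact_mod_cast hlen.trans hd⟩

variable [IsNoetherianRing R]

theorem IsMCM.subsingleton_ext_self (n : ℕ) [HasInjectiveDimensionLT (ModuleCat.of R R) n]
    {V : ModuleCat.{0} R} (hV : IsMCM R V) (j : ℕ) :
    Subsingleton (Ext V (ModuleCat.of R R) (j + 1)) := by
  obtain ⟨d, hd⟩ := exists_ringKrullDim_eq_natCast R
  obtain ⟨rs, hrs, hmax⟩ := exists_isRegular_forall_length_le R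
  have hlen : rs.length ≤ d := by exact_mod_cast hd ▸ length_le_ringKrullDim_of_isRegular hrs
  have := hV.1
  obtain hV₀ | hV₀ := subsingleton_or_nontrivial V
  · exact subsingleton_ext_of_isZero_left (ModuleCat.isZero_of_subsingleton V) _ _
  obtain ⟨ys, hys, hreg, rfl⟩ := hV.exists_isWeaklyRegular hd
  exact subsingleton_ext_of_isWeaklyRegular
    (subsingleton_ext_of_hasInjectiveDimensionLT hrs hmax n) hys V hreg (by omega)

theorem IsMCM.exists_isRegular_self (n : ℕ) [HasInjectiveDimensionLT (ModuleCat.of R R) n]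
    {U : ModuleCat.{0} R} [Nontrivial U] (hU : IsMCM R U) {d : ℕ} (hd : ringKrullDim R = d) :
    ∃ rs : List R, IsRegular R rs ∧ rs.length = d := by
  obtain ⟨rs, hrs, hmax⟩ := exists_isRegular_forall_length_le R
  have hlen : rs.length ≤ d := by exact_mod_cast hd ▸ length_le_ringKrullDim_of_isRegular hrs
  refine ⟨rs, hrs, hlen.antisymm (not_lt.mp fun hlt => ?_)⟩
  have := hU.1
  obtain ⟨ys, hys, hreg, rfl⟩ := hU.exists_isWeaklyRegular hd
  obtain ⟨rs', hlen', hrs'⟩ := exists_isRegular_of_forall_subsingleton_ext_self U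
    (fun j => subsingleton_ext_of_isWeaklyRegular
      (subsingleton_ext_of_hasInjectiveDimensionLT hrs hmax n) hys U hreg (by omega))
    (rs.length + 1)
  exact absurd (hmax rs' hrs') (by omega)

end Gorenstein

section RegularLocalRing

lemma exists_isPrime_le_ringKrullDim_quotient {A : Type*} [CommRing A] {n : ℕ}
    (h : n ≤ ringKrullDim A) : ∃ q : Ideal A, q.IsPrime ∧ n ≤ ringKrullDim (A ⧸ q) := by
  obtain ⟨l, hl⟩ := Order.le_krullDim_iff.mp h
  refine ⟨l.head.1, l.head.2, ?_⟩
  rw [ringKrullDim_quotient, Order.le_krullDim_iff]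
  exact ⟨⟨l.length, fun i => ⟨l i, LTSeries.head_le l i⟩, l.step⟩, hl⟩

lemma ringKrullDim_localization_primeCompl_le {A : Type*} [CommRing A] (p : Ideal A)
    [hp : p.IsPrime] : ringKrullDim (Localization p.primeCompl) ≤ ringKrullDim A :=
  (IsLocalization.AtPrime.ringKrullDim_eq_height p (Localization.AtPrime p)).trans_le
    (Ideal.height_le_ringKrullDim_of_ne_top hp.ne_top)

variable {A : Type*} [CommRing A]

lemma ringKrullDim_quotient_quotient_span_singleton (I : Ideal A) (x : A) :
    ringKrullDim ((A ⧸ I) ⧸ Ideal.span {Ideal.Quotient.mk I x}) =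
      ringKrullDim (A ⧸ (I ⊔ Ideal.span {x})) := by
  rw [← Set.image_singleton, ← Ideal.map_span]
  exact ringKrullDim_eq_of_ringEquiv (DoubleQuot.quotQuotEquivQuotSup I (Ideal.span {x}))

lemma isWeaklyRegular_cons_of_quotient {x : A} {rs : List A} [IsDomain A] (hx : x ≠ 0)
    (hrs : IsWeaklyRegular (A ⧸ Ideal.span {x}) (rs.map (Ideal.Quotient.mk (Ideal.span {x})))) :
    IsWeaklyRegular A (x :: rs) := by
  refine (isWeaklyRegular_cons_iff _ _ _).mpr ⟨.of_ne_zero hx, ?_⟩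
  have e : QuotSMulTop x A ≃ₗ[A] A ⧸ Ideal.span {x} := Submodule.quotEquivOfEq _ _
    (by rw [← Submodule.ideal_span_singleton_smul, smul_eq_mul, Ideal.mul_top])
  rw [e.isWeaklyRegular_congr]
  exact (isWeaklyRegular_map_algebraMap_iff (A ⧸ Ideal.span {x}) _ _).mp hrs

variable [IsLocalRing A]

lemma isLocalRing_quotient {I : Ideal A} (hI : I ≠ ⊤) : IsLocalRing (A ⧸ I) :=
  have := Ideal.Quotient.nontrivial_iff.mpr hI
  .of_surjective' (Ideal.Quotient.mk I) Ideal.Quotient.mk_surjective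

lemma mk_mem_maximalIdeal_quotient {I : Ideal A} [IsLocalRing (A ⧸ I)] {x : A}
    (hx : x ∈ maximalIdeal A) : Ideal.Quotient.mk I x ∈ maximalIdeal (A ⧸ I) :=
  map_maximalIdeal_of_surjective (Ideal.Quotient.mk I) Ideal.Quotient.mk_surjective ▸
    Ideal.mem_map_of_mem _ hx

lemma ofList_map_mk_eq_maximalIdeal_quotient {x : A} {rs : List A}
    [IsLocalRing (A ⧸ Ideal.span {x})] (hm : Ideal.ofList (x :: rs) = maximalIdeal A) :
    Ideal.ofList (rs.map (Ideal.Quotient.mk (Ideal.span {x}))) =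
      maximalIdeal (A ⧸ Ideal.span {x}) := by
  rw [← map_maximalIdeal_of_surjective (Ideal.Quotient.mk (Ideal.span {x}))
    Ideal.Quotient.mk_surjective, ← hm, Ideal.ofList_cons, Ideal.map_sup,
    Ideal.map_quotient_self, bot_sup_eq, Ideal.map_ofList]

lemma isRegular_of_isWeaklyRegular_of_ofList_eq {rs : List A}
    (hm : Ideal.ofList rs = maximalIdeal A) (hrs : IsWeaklyRegular A rs) : IsRegular A rs :=
  (isRegular_iff_isWeaklyRegular_of_subset_maximalIdeal fun _ hx =>
    hm ▸ Ideal.subset_span hx).mpr hrs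

variable [IsNoetherianRing A]

lemma ringKrullDim_le_quotient_span_singleton_add_one {x : A} (hx : x ∈ maximalIdeal A) :
    ringKrullDim A ≤ ringKrullDim (A ⧸ Ideal.span {x}) + 1 := by
  have hdim := ringKrullDim_le_ringKrullDim_quotient_add_card {x}
    (by simpa [ringJacobson_eq_maximalIdeal] using hx)
  rw [Finset.coe_singleton, Finset.card_singleton] at hdim
  exact_mod_cast hdim

lemma ringKrullDim_quotient_le_quotient_sup_span_singleton_add_one {I : Ideal A} (hI : I ≠ ⊤)
    {x : A} (hx : x ∈ maximalIdeal A) :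
    ringKrullDim (A ⧸ I) ≤ ringKrullDim (A ⧸ (I ⊔ Ideal.span {x})) + 1 := by
  have := isLocalRing_quotient hI
  rw [← ringKrullDim_quotient_quotient_span_singleton]
  exact ringKrullDim_le_quotient_span_singleton_add_one (mk_mem_maximalIdeal_quotient hx)

lemma ringKrullDim_quotient_sup_span_singleton_add_one {I : Ideal A} (hI : I.IsPrime) {y : A}
    (hy : y ∈ maximalIdeal A) (hyI : y ∉ I) :
    ringKrullDim (A ⧸ (I ⊔ Ideal.span {y})) + 1 = ringKrullDim (A ⧸ I) := by
  have := isLocalRing_quotient hI.ne_top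
  rw [← ringKrullDim_quotient_quotient_span_singleton]
  exact ringKrullDim_quotient_span_singleton_succ_eq_ringKrullDim_of_mem_nonZeroDivisors
    (mem_nonZeroDivisors_of_ne_zero (Ideal.Quotient.eq_zero_iff_mem.not.mpr hyI))
    (mk_mem_maximalIdeal_quotient hy)

lemma le_span_singleton_of_ringKrullDim_quotient_lt {q : Ideal A} {x : A}
    (hx : x ∈ maximalIdeal A) (hprime : (Ideal.span {x}).IsPrime) (hq : q ≠ ⊤)
    (hdim : ringKrullDim (A ⧸ Ideal.span {x}) < ringKrullDim (A ⧸ q)) : q ≤ Ideal.span {x} := by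
  by_contra hqx
  obtain ⟨y, hyq, hyx⟩ := Set.not_subset.mp hqx
  have hle : Ideal.span {x} ⊔ Ideal.span {y} ≤ q ⊔ Ideal.span {x} :=
    sup_le le_sup_right (((Ideal.span_singleton_le_iff_mem q).mpr hyq).trans le_sup_left)
  refine hdim.not_ge ?_
  calc ringKrullDim (A ⧸ q)
      ≤ ringKrullDim (A ⧸ (q ⊔ Ideal.span {x})) + 1 :=
        ringKrullDim_quotient_le_quotient_sup_span_singleton_add_one hq hx
    _ ≤ ringKrullDim (A ⧸ (Ideal.span {x} ⊔ Ideal.span {y})) + 1 := by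
        gcongr
        exact ringKrullDim_le_of_surjective _ (Ideal.Quotient.factor_surjective hle)
    _ = ringKrullDim (A ⧸ Ideal.span {x}) :=
        ringKrullDim_quotient_sup_span_singleton_add_one hprime (le_maximalIdeal hq hyq) hyx

lemma eq_bot_of_isPrime_of_le_span_singleton {q : Ideal A} (hq : q.IsPrime) {x : A}
    (hx : x ∈ maximalIdeal A) (hxq : x ∉ q) (hle : q ≤ Ideal.span {x}) : q = ⊥ := by
  refine Submodule.eq_bot_of_le_smul_of_le_jacobson_bot (maximalIdeal A) q
    (IsNoetherian.noetherian q) (fun y hy => ?_) (maximalIdeal_le_jacobson _)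
  obtain ⟨a, rfl⟩ := Ideal.mem_span_singleton'.mp (hle hy)
  rw [mul_comm]
  exact Submodule.smul_mem_smul hx ((hq.mem_or_mem hy).resolve_right hxq)

lemma ringKrullDim_eq_length_of_isWeaklyRegular {rs : List A}
    (hm : Ideal.ofList rs = maximalIdeal A) (hrs : IsWeaklyRegular A rs) :
    ringKrullDim A = rs.length := by
  rw [← ringKrullDim_add_length_eq_ringKrullDim_of_isRegular rs
    (isRegular_of_isWeaklyRegular_of_ofList_eq hm hrs), hm]
  let _ := Ideal.Quotient.field (maximalIdeal A)
  rw [ringKrullDim_eq_zero_of_field, zero_add]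

lemma isDomain_and_ne_zero_of_isPrime_span_singleton {x : A} (hx : x ∈ maximalIdeal A)
    (hprime : (Ideal.span {x}).IsPrime) {n : ℕ} (hn : ringKrullDim (A ⧸ Ideal.span {x}) = n)
    (hdim : (n + 1 : ℕ) ≤ ringKrullDim A) : IsDomain A ∧ x ≠ 0 := by
  obtain ⟨q, hq, hqdim⟩ := exists_isPrime_le_ringKrullDim_quotient hdim
  have hlt : ringKrullDim (A ⧸ Ideal.span {x}) < ringKrullDim (A ⧸ q) :=
    (hn.trans_lt (by exact_mod_cast Nat.lt_succ_self _)).trans_le hqdim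
  have hxq : x ∉ q := fun h => hlt.not_ge (ringKrullDim_le_of_surjective _
    (Ideal.Quotient.factor_surjective ((Ideal.span_singleton_le_iff_mem q).mpr h)))
  obtain rfl : q = ⊥ := eq_bot_of_isPrime_of_le_span_singleton hq hx hxq
    (le_span_singleton_of_ringKrullDim_quotient_lt hx hprime hq.ne_top hlt)
  exact ⟨IsDomain.of_bot_isPrime A, by simpa using hxq⟩

theorem isDomain_and_isWeaklyRegular_of_length_le_ringKrullDim {A : Type*} [CommRing A]
    [IsLocalRing A] [IsNoetherianRing A] {rs : List A} (hm : Ideal.ofList rs = maximalIdeal A)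
    (hdim : rs.length ≤ ringKrullDim A) : IsDomain A ∧ IsWeaklyRegular A rs := by
  induction hn : rs.length generalizing A rs with
  | zero =>
    obtain rfl := List.length_eq_zero_iff.mp hn
    rw [Ideal.ofList_nil] at hm
    exact ⟨(isField_iff_maximalIdeal_eq.mpr hm.symm).isDomain, .nil A A⟩
  | succ n ih =>
    obtain ⟨x, rs, rfl⟩ := List.exists_cons_of_length_eq_add_one hn
    obtain rfl : rs.length = n := by simpa using hn
    rw [List.length_cons] at hdim
    have hxm : x ∈ maximalIdeal A := hm ▸ Ideal.subset_span List.mem_cons_self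
    have hx : Ideal.span {x} ≠ ⊤ := ne_top_of_le_ne_top (Ideal.IsPrime.ne_top inferInstance)
      ((Ideal.span_singleton_le_iff_mem (maximalIdeal A)).mpr hxm)
    have := isLocalRing_quotient hx
    have hmx := ofList_map_mk_eq_maximalIdeal_quotient hm
    obtain ⟨hdom, hreg⟩ := ih hmx (by
      obtain ⟨e, he⟩ := exists_ringKrullDim_eq_natCast (A ⧸ Ideal.span {x})
      have hle := hdim.trans (ringKrullDim_le_quotient_span_singleton_add_one hxm)
      rw [he] at hle ⊢
      rw [List.length_map]
      exact_mod_cast Nat.succ_le_succ_iff.mp (by exact_mod_cast hle)) (List.length_map _)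
    have hdimx := ringKrullDim_eq_length_of_isWeaklyRegular hmx hreg
    rw [List.length_map] at hdimx
    obtain ⟨hA, hx₀⟩ := isDomain_and_ne_zero_of_isPrime_span_singleton hxm
      ((Ideal.Quotient.isDomain_iff_prime _).mp hdom) hdimx hdim
    exact ⟨hA, isWeaklyRegular_cons_of_quotient hx₀ hreg⟩

end RegularLocalRing

theorem IsRegularLocalRing.hasProjectiveDimensionLE {A : Type} [CommRing A]
    (hA : IsRegularLocalRing A) {d : ℕ} (hd : ringKrullDim A ≤ d) (M : ModuleCat.{0} A)
    [Module.Finite A M] : HasProjectiveDimensionLE M d := by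
  obtain ⟨_, _, s, hs, hcard⟩ := hA
  have hm : Ideal.ofList s.toList = maximalIdeal A := by
    rw [← jacobson_bot_eq_maximalIdeal, ← hs, Ideal.ofList]
    simp
  have hreg := isRegular_of_isWeaklyRegular_of_ofList_eq hm
    (isDomain_and_isWeaklyRegular_of_length_le_ringKrullDim hm (by simp [hcard])).2
  have hlen : s.toList.length ≤ d := by
    rw [← hcard] at hd
    simpa using hd
  have := hasProjectiveDimensionLE_quotient_ofList hreg
  have hpd : HasProjectiveDimensionLE (ModuleCat.of A (ResidueField A)) s.toList.length :=
    ModuleCat.hasProjectiveDimensionLE_of_linearEquiv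
      (M := ModuleCat.of A (A ⧸ Ideal.ofList s.toList)) (Submodule.quotEquivOfEq _ _ hm) _
  refine ModuleCat.hasProjectiveDimensionLT_of_forall_finite M (d + 1) fun N _ =>
    subsingleton_ext_of_residueField (fun j hj => ?_) M le_rfl
  exact hpd.subsingleton _ (s.toList.length + 1) _ (by omega) N

section Syzygies

/-- `U` is left orthogonal to the ring: `Extⁱ(U, R) = 0` for all `i > 0`. Over a Gorenstein ring
this is the homological form of being maximal Cohen–Macaulay. -/
def ExtAcyclic {R : Type u} [CommRing R] (U : ModuleCat.{u} R) : Prop :=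
  ∀ j : ℕ, Subsingleton (Ext U (ModuleCat.of R R) (j + 1))

/-- `IsSyzygy U n V` means that `V` is an `n`-th syzygy of `U` with respect to some resolution by
finite free modules, not necessarily a minimal one. -/
inductive IsSyzygy {R : Type u} [CommRing R] (U : ModuleCat.{u} R) : ℕ → ModuleCat.{u} R → Prop
  | zero : IsSyzygy U 0 U
  | succ {n : ℕ} {S : ShortComplex (ModuleCat.{u} R)} (hS : S.ShortExact)
      (hfin : Module.Finite R S.X₂) (hfree : Module.Free R S.X₂) (h : IsSyzygy U n S.X₃) :
      IsSyzygy U (n + 1) S.X₁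

variable {R : Type u} [CommRing R]

lemma exists_shortExact_free (V : ModuleCat.{u} R) [Module.Finite R V] :
    ∃ S : ShortComplex (ModuleCat.{u} R), S.ShortExact ∧ Module.Finite R S.X₂ ∧
      Module.Free R S.X₂ ∧ S.X₃ = V := by
  obtain ⟨n, f, hf⟩ := Module.Finite.exists_fin' R V
  exact ⟨_, LinearMap.shortExact_shortComplexKer hf, inferInstanceAs (Module.Finite R (Fin n → R)),
    inferInstanceAs (Module.Free R (Fin n → R)), rfl⟩

lemma finite_X₁_of_finite_X₂ [IsNoetherianRing R] {S : ShortComplex (ModuleCat.{u} R)}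
    (hS : S.ShortExact) [Module.Finite R S.X₂] : Module.Finite R S.X₁ :=
  Module.Finite.of_injective S.f.hom hS.moduleCat_injective_f

lemma subsingleton_ext_zero_of_mono {C : Type*} [Category C] [Abelian C] [HasExt C] {X Y Z : C}
    (f : Y ⟶ Z) [Mono f] (h : Subsingleton (Ext X Z 0)) : Subsingleton (Ext X Y 0) := by
  have : Subsingleton (X ⟶ Z) := Ext.homEquiv₀.symm.subsingleton
  have : Subsingleton (X ⟶ Y) := ⟨fun a b => (cancel_mono f).mp (Subsingleton.elim _ _)⟩
  exact Ext.homEquiv₀.subsingleton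

namespace IsSyzygy

variable {U V : ModuleCat.{u} R} {n : ℕ}

lemma finite [IsNoetherianRing R] [Module.Finite R U] (hV : IsSyzygy U n V) :
    Module.Finite R V := by
  cases hV with
  | zero => infer_instance
  | succ hS _ => exact finite_X₁_of_finite_X₂ hS

lemma exists_of_finite [IsNoetherianRing R] (U : ModuleCat.{u} R) [Module.Finite R U] (n : ℕ) :
    ∃ V, IsSyzygy U n V := by
  induction n with
  | zero => exact ⟨U, zero⟩
  | succ n ih =>
    obtain ⟨V, hV⟩ := ih
    have := hV.finite
    obtain ⟨S, hS, hfin, hfree, rfl⟩ := exists_shortExact_free V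
    exact ⟨S.X₁, succ hS hfin hfree hV⟩

lemma subsingleton_ext_right {X : ModuleCat.{u} R} {d : ℕ} (hV : IsSyzygy U n V)
    (hX : ∀ i < d, Subsingleton (Ext X (ModuleCat.of R R) i)) {i : ℕ} (hin : i < n) (hid : i < d) :
    Subsingleton (Ext X V i) := by
  induction hV generalizing i with
  | zero => omega
  | @succ n S hS hfin hfree _ ih =>
    have hF : Subsingleton (Ext X S.X₂ i) := subsingleton_ext_free_right (hX i hid)
    cases i with
    | zero =>
      have := hS.mono_f
      exact subsingleton_ext_zero_of_mono S.f hF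
    | succ i => exact subsingleton_ext_X₁_right hS (ih (by omega) (by omega)) hF

end IsSyzygy

lemma ExtAcyclic.X₁ {S : ShortComplex (ModuleCat.{u} R)} (hS : S.ShortExact)
    [Module.Free R S.X₂] (h : ExtAcyclic S.X₃) : ExtAcyclic S.X₁ := fun j =>
  subsingleton_ext_X₁_left hS (Ext.subsingleton_of_projective _ _ _) (h (j + 1))

lemma ExtAcyclic.of_isSyzygy {U V : ModuleCat.{u} R} {n : ℕ} (hU : ExtAcyclic U)
    (hV : IsSyzygy U n V) : ExtAcyclic V := by
  induction hV with
  | zero => exact hU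
  | succ hS _ _ _ ih => exact ih.X₁ hS

end Syzygies

section Depth

variable {R : Type} [CommRing R] [IsLocalRing R]

lemma support_residueField :
    Module.support R (ResidueField R) = PrimeSpectrum.zeroLocus (maximalIdeal R) := by
  rw [Module.support_eq_zeroLocus]
  exact congrArg _ (congrArg _ (Ideal.annihilator_quotient (I := maximalIdeal R)))

lemma maximalIdeal_smul_top_lt_top (M : Type*) [AddCommGroup M] [Module R M] [Module.Finite R M]
    [Nontrivial M] : maximalIdeal R • (⊤ : Submodule R M) < ⊤ :=
  lt_top_iff_ne_top.mpr (Submodule.top_ne_ideal_smul_of_le_jacobson_annihilator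
    (maximalIdeal_le_jacobson _)).symm

variable [IsNoetherianRing R]

lemma subsingleton_ext_residueField_of_isRegular {rs : List R} (hrs : IsRegular R rs)
    {i : ℕ} (hi : i < rs.length) :
    Subsingleton (Ext (ModuleCat.of R (ResidueField R)) (ModuleCat.of R R) i) :=
  ModuleCat.subsingleton_ext_of_exists_isRegular (maximalIdeal R) _ support_residueField.subset _
    (maximalIdeal_smul_top_lt_top R) rs
    (fun _ hr => ofList_le_maximalIdeal_of_isRegular hrs (Ideal.subset_span hr)) hrs i hi

lemma isMCM_of_subsingleton_ext_residueField {d : ℕ} (hd : ringKrullDim R = d)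
    (M : ModuleCat.{0} R) [Module.Finite R M]
    (h : ∀ i < d, Subsingleton (Ext (ModuleCat.of R (ResidueField R)) M i)) : IsMCM R M := by
  refine ⟨inferInstance, (subsingleton_or_nontrivial M).imp_right fun (_ : Nontrivial M) => ?_⟩
  obtain ⟨rs, rfl, hmem, hrs⟩ := ModuleCat.exists_isRegular_of_exists_subsingleton_ext
    (maximalIdeal R) d M (maximalIdeal_smul_top_lt_top M) _ support_residueField h
  exact ⟨rs, by rwa [jacobson_bot_eq_maximalIdeal], hrs.toIsWeaklyRegular, hd.symm⟩

lemma IsSyzygy.isMCM {rs : List R} (hrs : IsRegular R rs) (hd : ringKrullDim R = rs.length)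
    {U V : ModuleCat.{0} R} [Module.Finite R U] {n : ℕ} (hV : IsSyzygy U n V)
    (hn : rs.length ≤ n) : IsMCM R V :=
  have := hV.finite
  isMCM_of_subsingleton_ext_residueField hd V fun _ hi => hV.subsingleton_ext_right
    (fun _ => subsingleton_ext_residueField_of_isRegular hrs) (hi.trans_le hn) hi

lemma isMCM_of_free {rs : List R} (hrs : IsRegular R rs) (hd : ringKrullDim R = rs.length)
    (F : ModuleCat.{0} R) [Module.Finite R F] [Module.Free R F] : IsMCM R F :=
  isMCM_of_subsingleton_ext_residueField hd F fun _ hi =>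
    subsingleton_ext_free_right (subsingleton_ext_residueField_of_isRegular hrs hi)

lemma exists_shortExact_isSyzygy_isMCM {rs : List R} (hrs : IsRegular R rs)
    (hd : ringKrullDim R = rs.length) (U : ModuleCat.{0} R) [Module.Finite R U] :
    ∃ S : ShortComplex (ModuleCat.{0} R), S.ShortExact ∧ Module.Free R S.X₂ ∧
      IsSyzygy U rs.length S.X₃ ∧ IsMCM R S.X₁ ∧ IsMCM R S.X₂ ∧ IsMCM R S.X₃ := by
  obtain ⟨V, hV⟩ := IsSyzygy.exists_of_finite U rs.length
  have := hV.finite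
  obtain ⟨S, hS, hfin, hfree, rfl⟩ := exists_shortExact_free V
  exact ⟨S, hS, hfree, hV, (IsSyzygy.succ hS hfin hfree hV).isMCM hrs hd (Nat.le_succ _),
    isMCM_of_free hrs hd S.X₂, hV.isMCM hrs hd le_rfl⟩

end Depth

section FiniteLength

variable {R : Type u} [CommRing R]

lemma exists_comp_eq_smul_id_of_projective_localizedModule (S : Submonoid R)
    {F V : ModuleCat.{u} R} (g : F ⟶ V) [Epi g] [Module.FinitePresentation R V]
    [Projective (V.localizedModule S)] : ∃ s ∈ S, ∃ h : V ⟶ F, h ≫ g = s • 𝟙 V := by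
  let mkF := F.localizedModuleMkLinearMap S
  let mkV := V.localizedModuleMkLinearMap S
  have : Epi (ModuleCat.localizedModuleMap S g) :=
    inferInstanceAs (Epi ((ModuleCat.localizedModuleFunctor S).map g))
  obtain ⟨σ, hσ⟩ : ∃ σ : V.localizedModule S ⟶ F.localizedModule S,
      σ ≫ ModuleCat.localizedModuleMap S g = 𝟙 _ :=
    ⟨Projective.factorThru (𝟙 _) _, Projective.factorThru_comp _ _⟩
  obtain ⟨h, s, hs⟩ := Module.FinitePresentation.exists_lift_of_isLocalizedModule S mkF
    (σ.hom.restrictScalars R ∘ₗ mkV)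
  have hgh : mkV ∘ₗ g.hom ∘ₗ h = mkV ∘ₗ (s • LinearMap.id) := by
    ext x
    have hsx : mkF (h x) = s • σ.hom (mkV x) := congr($hs x)
    change mkV (g.hom (h x)) = mkV (s • x)
    have hσx : IsLocalizedModule.map S mkF mkV g.hom (σ.hom (mkV x)) = mkV x :=
      congr($(hσ).hom (mkV x))
    rw [← IsLocalizedModule.map_apply S mkF mkV g.hom (h x), hsx, LinearMap.map_smul_of_tower, hσx,
      LinearMap.map_smul_of_tower]
  obtain ⟨t, ht⟩ := Module.Finite.exists_smul_of_comp_eq_of_isLocalizedModule S mkV _ _ hgh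
  refine ⟨t * s, (t * s).2, ModuleCat.ofHom (t • h), ?_⟩
  ext x
  exact (map_smul g.hom (t : R) (h x)).trans (congr($ht x).trans (smul_smul _ _ _))

lemma mem_annihilator_ext_of_comp_eq_smul_id {F V M : ModuleCat.{u} R} {n : ℕ}
    (hF : Subsingleton (Ext F M n)) {s : R} {g : F ⟶ V} {h : V ⟶ F} (hs : h ≫ g = s • 𝟙 V) :
    s ∈ Module.annihilator R (Ext V M n) := by
  refine Module.mem_annihilator.mpr fun x => ?_
  rw [← Ext.mk₀_id_comp x, ← Ext.smul_comp, ← Ext.mk₀_smul, ← hs, ← Ext.mk₀_comp_mk₀_assoc,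
    hF.elim ((Ext.mk₀ g).comp x (zero_add n)) 0, Ext.comp_zero]

lemma IsSyzygy.hasProjectiveDimensionLE_localizedModule {U V : ModuleCat.{u} R} {n m : ℕ}
    (hV : IsSyzygy U n V) (S : Submonoid R)
    [hU : HasProjectiveDimensionLE (U.localizedModule S) (n + m)] :
    HasProjectiveDimensionLE (V.localizedModule S) m := by
  induction hV generalizing m with
  | zero => simpa using hU
  | @succ n T hT _ hfree _ ih =>
    have : HasProjectiveDimensionLE (U.localizedModule S) (n + (m + 1)) := by
      rwa [← add_assoc, add_right_comm]
    have : Projective (T.map (ModuleCat.localizedModuleFunctor S)).X₂ :=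
      (ModuleCat.localizedModuleFunctor S).projective_obj _
    exact (hT.map_of_exact (ModuleCat.localizedModuleFunctor S)).hasProjectiveDimensionLT_X₁
      (m + 1) (hasProjectiveDimensionLT_of_ge _ 1 _ (by omega)) ih

variable [IsLocalRing R] [IsNoetherianRing R]

lemma length_ne_top_of_forall_annihilator_le_eq_maximalIdeal {L : Type*} [AddCommGroup L]
    [Module R L] [hL : Module.Finite R L]
    (h : ∀ p : Ideal R, p.IsPrime → Module.annihilator R L ≤ p → p = maximalIdeal R) :
    Module.length R L ≠ ⊤ := by
  induction hL using IsNoetherianRing.induction_on_isQuotientEquivQuotientPrime R with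
  | subsingleton L => simp [Module.length_eq_zero]
  | quotient L q e =>
    have hq : q.1 = maximalIdeal R :=
      h q.1 q.2 (by rw [e.annihilator_eq, Ideal.annihilator_quotient])
    have : IsSimpleModule R (R ⧸ maximalIdeal R) :=
      isSimpleModule_iff_isCoatom.mpr (Ideal.isMaximal_def.mp (maximalIdeal.isMaximal R))
    rw [e.length_eq, hq, Module.length_eq_one]
    exact ENat.one_ne_top
  | exact N₁ N₂ N₃ f g hf hg hfg ih₁ ih₃ =>
    rw [Module.length_eq_add_of_exact f g hf hg hfg]
    exact WithTop.add_ne_top.mpr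
      ⟨ih₁ fun p hp hle => h p hp ((LinearMap.annihilator_le_of_injective f hf).trans hle),
        ih₃ fun p hp hle => h p hp ((LinearMap.annihilator_le_of_surjective g hg).trans hle)⟩

end FiniteLength

section IsolatedSingularity

variable {R : Type} [CommRing R]

lemma IsSyzygy.projective_localizedModule {d : ℕ} (hd : ringKrullDim R = d)
    {U V : ModuleCat.{0} R} [Module.Finite R U] (hV : IsSyzygy U d V) (p : Ideal R) [p.IsPrime]
    (hp : IsRegularLocalRing (Localization p.primeCompl)) :
    Projective (V.localizedModule p.primeCompl) := by
  have hfin : Module.Finite (Localization p.primeCompl) (U.localizedModule p.primeCompl) :=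
    Module.Finite.of_isLocalizedModule p.primeCompl (U.localizedModuleMkLinearMap p.primeCompl)
  have := hp.hasProjectiveDimensionLE (hd ▸ ringKrullDim_localization_primeCompl_le p)
    (U.localizedModule p.primeCompl)
  exact (projective_iff_hasProjectiveDimensionLT_one).mpr
    (hV.hasProjectiveDimensionLE_localizedModule (m := 0) p.primeCompl)

theorem IsSyzygy.length_ext_ne_top [IsLocalRing R] [IsNoetherianRing R]
    (hsing : IsolatedSingularity R) {d : ℕ} (hd : ringKrullDim R = d)
    {U V : ModuleCat.{0} R} [Module.Finite R U] (hV : IsSyzygy U d V)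
    (M : ModuleCat.{0} R) [Module.Finite R M] : Module.length R (Ext V M 1) ≠ ⊤ := by
  have := hV.finite
  refine length_ne_top_of_forall_annihilator_le_eq_maximalIdeal fun p hp hle => ?_
  by_contra hpm
  have hreg := hsing p hp (by rwa [jacobson_bot_eq_maximalIdeal])
  have := hV.projective_localizedModule hd p hreg
  obtain ⟨T, hT, _, hfree, rfl⟩ := exists_shortExact_free V
  have := hT.epi_g
  have := Module.finitePresentation_of_finite R T.X₃
  obtain ⟨s, hs, h, hg⟩ := exists_comp_eq_smul_id_of_projective_localizedModule p.primeCompl T.g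
  exact hs (hle (mem_annihilator_ext_of_comp_eq_smul_id
    (Ext.subsingleton_of_projective T.X₂ M 0) hg))

end IsolatedSingularity

section ExtLength

variable {R : Type u} [CommRing R] {S T : ShortComplex (ModuleCat.{u} R)}

lemma postcompOfLinear_f_injective (hS : S.ShortExact) {V : ModuleCat.{u} R}
    (hlift : ∀ u : V ⟶ S.X₃, ∃ v, v ≫ S.g = u) :
    Function.Injective (Ext.postcompOfLinear (Ext.mk₀ S.f) R V (add_zero 1)) := by
  refine (injective_iff_map_eq_zero _).mpr fun x hx => ?_
  obtain ⟨w, rfl⟩ := Ext.covariant_sequence_exact₁ V hS x hx (n₀ := 0) rfl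
  obtain ⟨u, rfl⟩ := (Ext.mk₀_bijective _ _).surjective w
  obtain ⟨v, rfl⟩ := hlift u
  rw [← Ext.mk₀_comp_mk₀, Ext.comp_assoc_of_second_deg_zero, hS.comp_extClass, Ext.comp_zero]

lemma postcompOfLinear_g_surjective (hT : T.ShortExact) [Projective T.X₂]
    (hlift : ∀ u : T.X₁ ⟶ S.X₃, ∃ v, v ≫ S.g = u) :
    Function.Surjective (Ext.postcompOfLinear (Ext.mk₀ S.g) R T.X₃ (add_zero 1)) := fun x => by
  have hP : Subsingleton (Ext T.X₂ S.X₃ 1) := Ext.subsingleton_of_projective _ _ 0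
  obtain ⟨w, rfl⟩ := Ext.contravariant_sequence_exact₃ hT S.X₃ x (hP.elim _ _) (n₀ := 0) rfl
  obtain ⟨u, rfl⟩ := (Ext.mk₀_bijective _ _).surjective w
  obtain ⟨v, rfl⟩ := hlift u
  refine ⟨hT.extClass.comp (Ext.mk₀ v) (add_zero 1), ?_⟩
  rw [← Ext.mk₀_comp_mk₀]
  exact Ext.comp_assoc_of_third_deg_zero _ _ _ _

lemma postcompOfLinear_f_g_exact (hS : S.ShortExact) (V : ModuleCat.{u} R) :
    Function.Exact (Ext.postcompOfLinear (Ext.mk₀ S.f) R V (add_zero 1))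
      (Ext.postcompOfLinear (Ext.mk₀ S.g) R V (add_zero 1)) := by
  refine fun y => ⟨Ext.covariant_sequence_exact₂ V hS y, ?_⟩
  rintro ⟨z, rfl⟩
  change (z.comp (Ext.mk₀ S.f) (add_zero 1)).comp (Ext.mk₀ S.g) (add_zero 1) = 0
  rw [Ext.comp_assoc_of_third_deg_zero, Ext.mk₀_comp_mk₀, S.zero, Ext.mk₀_zero, Ext.comp_zero]

lemma length_ext_X₂_eq_add (hS : S.ShortExact) (hT : T.ShortExact) [Projective T.X₂]
    (hlift₁ : ∀ u : T.X₁ ⟶ S.X₃, ∃ v, v ≫ S.g = u)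
    (hlift₃ : ∀ u : T.X₃ ⟶ S.X₃, ∃ v, v ≫ S.g = u) :
    Module.length R (Ext T.X₃ S.X₂ 1) =
      Module.length R (Ext T.X₃ S.X₁ 1) + Module.length R (Ext T.X₃ S.X₃ 1) :=
  Module.length_eq_add_of_exact _ _ (postcompOfLinear_f_injective hS hlift₃)
    (postcompOfLinear_g_surjective hT hlift₁) (postcompOfLinear_f_g_exact hS T.X₃)

/-- `V` has Ext-finite length: `Ext¹(V, M)` has finite length for every finite module `M`. -/
def HasFiniteExtLength (V : ModuleCat.{u} R) : Prop :=
  ∀ (M : ModuleCat.{u} R) [Module.Finite R M], Module.length R (Ext V M 1) ≠ ⊤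

/-- The length of `Ext¹(V, M)` as an integer; it is `0` when that length is infinite. -/
noncomputable def extLength (V M : ModuleCat.{u} R) : ℤ :=
  (Module.length R (Ext V M 1)).toNat

lemma extLength_nonneg (V M : ModuleCat.{u} R) : 0 ≤ extLength V M :=
  Int.natCast_nonneg _

lemma extLength_eq_zero_iff {V M : ModuleCat.{u} R} (h : Module.length R (Ext V M 1) ≠ ⊤) :
    extLength V M = 0 ↔ Subsingleton (Ext V M 1) := by
  rw [extLength, Nat.cast_eq_zero, ENat.toNat_eq_zero, or_iff_left h, Module.length_eq_zero_iff]

lemma extLength_X₃_add_X₁_sub_X₂ (hV : HasFiniteExtLength T.X₃) (hS : S.ShortExact)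
    [Module.Finite R S.X₁] [Module.Finite R S.X₃] (hT : T.ShortExact) [Projective T.X₂]
    (hlift₁ : ∀ u : T.X₁ ⟶ S.X₃, ∃ v, v ≫ S.g = u)
    (hlift₃ : ∀ u : T.X₃ ⟶ S.X₃, ∃ v, v ≫ S.g = u) :
    extLength T.X₃ S.X₃ + extLength T.X₃ S.X₁ - extLength T.X₃ S.X₂ = 0 := by
  simp only [extLength]
  rw [length_ext_X₂_eq_add hS hT hlift₁ hlift₃, ENat.toNat_add (hV S.X₁) (hV S.X₃)]
  push_cast
  ring

lemma extLength_add_sub_of_linearEquiv_prod {V : ModuleCat.{u} R} [Module.Finite R V]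
    (hV : HasFiniteExtLength V) {X Z Y : ModuleCat.{u} R} [Module.Finite R X] [Module.Finite R Z]
    (e : Y ≃ₗ[R] X × Z) : extLength V X + extLength V Z - extLength V Y = 0 := by
  obtain ⟨T, hT, -, hfree, rfl⟩ := exists_shortExact_free V
  have hinr : Function.Injective (e.symm.toLinearMap ∘ₗ LinearMap.inr R X Z) :=
    e.symm.injective.comp LinearMap.inr_injective
  have hfst : Function.Surjective (LinearMap.fst R X Z ∘ₗ e.toLinearMap) :=
    Prod.fst_surjective.comp e.surjective
  have hexact : Function.Exact (e.symm.toLinearMap ∘ₗ LinearMap.inr R X Z)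
      (LinearMap.fst R X Z ∘ₗ e.toLinearMap) := by
    refine fun y => ⟨fun hy => ⟨(e y).2, e.injective ?_⟩, ?_⟩
    · have hy₁ : (e y).1 = 0 := hy
      simp [Prod.ext_iff, hy₁]
    · rintro ⟨z, rfl⟩
      simp
  have hlift (W : ModuleCat.{u} R) (u : W ⟶ X) :
      ∃ v : W ⟶ Y, v ≫ ModuleCat.ofHom (LinearMap.fst R X Z ∘ₗ e.toLinearMap) = u :=
    ⟨u ≫ ModuleCat.ofHom (e.symm.toLinearMap ∘ₗ LinearMap.inl R X Z), by ext; simp⟩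
  exact extLength_X₃_add_X₁_sub_X₂ (S := ModuleCat.shortComplexOfCompEqZero _ _ _)
    hV (shortExact_of_injective_of_surjective_of_exact hinr hfst hexact) hT
    (hlift T.X₁) (hlift T.X₃)

end ExtLength

section GrothendieckGroup

variable {R : Type} [CommRing R] (V : ModuleCat.{0} R) [Module.Finite R V]
  (hV : HasFiniteExtLength V)

/-- The homomorphism `G(CM(R)) → ℤ` sending the class of `M` to the length of `Ext¹(V, M)`. -/
noncomputable def extLengthHom : GCM R →+ ℤ :=
  QuotientAddGroup.lift (GRel R) (FreeAbelianGroup.lift fun M : CMMod R => extLength V M.1) <| by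
    refine (AddSubgroup.closure_le _).mpr ?_
    rintro _ ⟨X, Z, Y, ⟨e⟩, rfl⟩
    have := X.2.1
    have := Z.2.1
    simpa using extLength_add_sub_of_linearEquiv_prod hV e

lemma extLengthHom_gcls (X Z Y : CMMod R) :
    extLengthHom V hV
        (gcls R (FreeAbelianGroup.of X + FreeAbelianGroup.of Z - FreeAbelianGroup.of Y)) =
      extLength V X.1 + extLength V Z.1 - extLength V Y.1 := by
  change FreeAbelianGroup.lift (fun M : CMMod R => extLength V M.1) _ = _
  simp

/-- The class `[S.X₃] + [S.X₁] - [S.X₂]` in `G(CM(R))` of a short complex `S` of maximal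
Cohen–Macaulay modules. -/
noncomputable def relationClass {S : ShortComplex (ModuleCat.{0} R)} (h₁ : IsMCM R S.X₁)
    (h₂ : IsMCM R S.X₂) (h₃ : IsMCM R S.X₃) : GCM R :=
  let of (M : CMMod R) : FreeAbelianGroup (CMMod R) := FreeAbelianGroup.of M
  gcls R (of ⟨S.X₃, h₃⟩ + of ⟨S.X₁, h₁⟩ - of ⟨S.X₂, h₂⟩)

lemma extLengthHom_relationClass {S : ShortComplex (ModuleCat.{0} R)} (h₁ : IsMCM R S.X₁)
    (h₂ : IsMCM R S.X₂) (h₃ : IsMCM R S.X₃) :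
    extLengthHom V hV (relationClass h₁ h₂ h₃) =
      extLength V S.X₃ + extLength V S.X₁ - extLength V S.X₂ :=
  extLengthHom_gcls V hV _ _ _

end GrothendieckGroup

section Cosyzygies

lemma nonempty_retract_cokernel {C : Type*} [Category C] [Abelian C] {S : ShortComplex C}
    (hS : S.ShortExact) {X F : C} {ι : X ⟶ F} (hX : Retract X S.X₁) {α : F ⟶ S.X₂}
    {β : S.X₂ ⟶ F} (hα : ι ≫ α = hX.i ≫ S.f) (hβ : S.f ≫ β = hX.r ≫ ι) [IsIso (α ≫ β)] :
    Nonempty (Retract (cokernel ι) S.X₃) := by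
  have := hS.epi_g
  have hid : ι ≫ α ≫ β = ι := by
    rw [reassoc_of% hα, hβ, hX.retract_assoc]
  let a : cokernel ι ⟶ S.X₃ := cokernel.desc ι (α ≫ S.g) (by rw [reassoc_of% hα, S.zero, comp_zero])
  let b : S.X₃ ⟶ cokernel ι := hS.exact.desc (β ≫ cokernel.π ι) (by
    rw [reassoc_of% hβ, cokernel.condition, comp_zero])
  let e := cokernel.mapIso ι ι (Iso.refl X) (asIso (α ≫ β)) (by simp [hid])
  have hab : a ≫ b = e.hom := by
    rw [← cancel_epi (cokernel.π ι)]
    simp [a, b, e]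
  exact ⟨⟨e.inv ≫ a, b, by rw [Category.assoc, hab, e.inv_hom_id]⟩⟩

lemma not_projective_cokernel {C : Type*} [Category C] [Abelian C] {X F : C} {ι : X ⟶ F} [Mono ι]
    [Projective F] (hX : ¬ Projective X) : ¬ Projective (cokernel ι) := fun _ => by
  have hS : (ShortComplex.mk ι (cokernel.π ι) (cokernel.condition ι)).ShortExact :=
    { exact := ShortComplex.exact_cokernel ι }
  let σ := hS.splittingOfProjective
  have hX' : Retract X F := ⟨ι, σ.r, σ.f_r⟩
  exact hX hX'.projective

variable {R : Type u} [CommRing R]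

/-- `ι : X ⟶ F` is a left approximation of `X` by finite free modules: every homomorphism from
`X` to a finite free module extends along `ι`. -/
structure IsFreeApproximation {X F : ModuleCat.{u} R} (ι : X ⟶ F) : Prop where
  finite : Module.Finite R F
  free : Module.Free R F
  exists_comp_eq (G : ModuleCat.{u} R) [Module.Finite R G] [Module.Free R G] (u : X ⟶ G) :
    ∃ c : F ⟶ G, ι ≫ c = u

/-- A left approximation by finite free modules that is left minimal. The cokernel of such an `ι`
is the minimal cosyzygy of `X`. -/
structure IsMinimalFreeApproximation {X F : ModuleCat.{u} R} (ι : X ⟶ F) : Prop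
    extends IsFreeApproximation ι where
  isIso_of_comp_eq (e : F ⟶ F) (he : ι ≫ e = ι) : IsIso e

lemma IsMinimalFreeApproximation.retract_cokernel {X F : ModuleCat.{u} R} {ι : X ⟶ F}
    (hι : IsMinimalFreeApproximation ι)
    {S : ShortComplex (ModuleCat.{u} R)} (hS : S.ShortExact) [Module.Finite R S.X₂]
    [Module.Free R S.X₂] (hext : Subsingleton (Ext S.X₃ (ModuleCat.of R R) 1))
    (hproj : ¬ Projective X) (hX : Retract X S.X₁) :
    ¬ Projective (cokernel ι) ∧ Nonempty (Retract (cokernel ι) S.X₃) := by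
  have := hι.finite
  have := hι.free
  have := hS.mono_f
  obtain ⟨α, hα⟩ := hι.exists_comp_eq S.X₂ (hX.i ≫ S.f)
  obtain ⟨β, hβ⟩ := exists_f_comp_eq hS (subsingleton_ext_free_right hext) (hX.r ≫ ι)
  have : Mono ι := mono_of_mono_fac hα
  have : IsIso (α ≫ β) := hι.isIso_of_comp_eq _ (by rw [reassoc_of% hα, hβ, hX.retract_assoc])
  exact ⟨not_projective_cokernel hproj, nonempty_retract_cokernel hS hX hα hβ⟩

lemma isFreeApproximation_of_dual {X F : ModuleCat.{u} R} [Module.Finite R F] [Module.Free R F]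
    {ι : X ⟶ F} (h : ∀ ξ : Module.Dual R X, ∃ c : Module.Dual R F, c ∘ₗ ι.hom = ξ) :
    IsFreeApproximation ι where
  finite := inferInstance
  free := inferInstance
  exists_comp_eq G _ _ u := by
    let b := Module.Free.chooseBasis R G
    choose c hc using fun i => h (b.coord i ∘ₗ u.hom)
    refine ⟨ModuleCat.ofHom (b.equivFun.symm.toLinearMap ∘ₗ LinearMap.pi c), ?_⟩
    ext x
    refine b.equivFun.injective (funext fun i => ?_)
    simpa [-Module.Basis.equivFun_symm_apply] using LinearMap.congr_fun (hc i) x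

lemma exists_isFreeApproximation [IsNoetherianRing R] (X : ModuleCat.{u} R) [Module.Finite R X] :
    ∃ (F : ModuleCat.{u} R) (ι : X ⟶ F), IsFreeApproximation ι := by
  have : Module.Finite R (Module.Dual R X) := Module.IsNoetherian.finite R (Module.Dual R X)
  obtain ⟨n, ξ, hξ⟩ := Module.Finite.exists_fin (R := R) (M := Module.Dual R X)
  refine ⟨ModuleCat.of R (Fin n → R), ModuleCat.ofHom (LinearMap.pi ξ),
    isFreeApproximation_of_dual fun η => ?_⟩
  obtain ⟨c, hc⟩ := (Submodule.mem_span_range_iff_exists_fun R).mp (hξ ▸ Submodule.mem_top (x := η))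
  refine ⟨Fintype.linearCombination R c, ?_⟩
  ext x
  simp [← hc, Fintype.linearCombination_apply, mul_comm]

variable [IsLocalRing R]

lemma IsFreeApproximation.exists_finrank_lt {X F : ModuleCat.{u} R} {ι : X ⟶ F}
    (hι : IsFreeApproximation ι) {c : Module.Dual R F} (hc : Function.Surjective c)
    (hcι : c ∘ₗ ι.hom = 0) :
    ∃ (K : ModuleCat.{u} R) (κ : X ⟶ K), IsFreeApproximation κ ∧
      Module.finrank R K < Module.finrank R F := by
  have := hι.finite
  have := hι.free
  obtain ⟨s, hs⟩ := Module.projective_lifting_property c LinearMap.id hc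
  obtain ⟨e, -⟩ := ((Function.Exact.split_tfae' (LinearMap.exact_subtype_ker_map c)).out 0 2 :
    (_ ∧ ∃ l, c ∘ₗ l = LinearMap.id) ↔ _).mp ⟨Subtype.val_injective, s, hs⟩
  have hfin : Module.Finite R (LinearMap.ker c) :=
    .of_surjective (LinearMap.fst R _ R ∘ₗ e.toLinearMap) (Prod.fst_surjective.comp e.surjective)
  have hproj : Module.Projective R (LinearMap.ker c) :=
    .of_split (e.symm.toLinearMap ∘ₗ LinearMap.inl R _ R) (LinearMap.fst R _ R ∘ₗ e.toLinearMap)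
      (by ext; simp)
  have hfree : Module.Free R (LinearMap.ker c) := Module.free_of_flat_of_isLocalRing
  refine ⟨ModuleCat.of R (LinearMap.ker c),
    ModuleCat.ofHom (ι.hom.codRestrict _ (LinearMap.congr_fun hcι)),
    isFreeApproximation_of_dual fun ξ => ?_, ?_⟩
  · obtain ⟨b, hb⟩ := hι.exists_comp_eq (ModuleCat.of R R) (ModuleCat.ofHom ξ)
    exact ⟨b.hom ∘ₗ (LinearMap.ker c).subtype, congr(($hb).hom)⟩
  · rw [e.finrank_eq, Module.finrank_prod, Module.finrank_self]
    exact Nat.lt_succ_self _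

lemma surjective_of_forall_dual_mem_maximalIdeal {F : Type*} [AddCommGroup F] [Module R F]
    [Module.Finite R F] [Module.Free R F] {e : F →ₗ[R] F}
    (h : ∀ (c : Module.Dual R F) (v : F), c (v - e v) ∈ maximalIdeal R) :
    Function.Surjective e := by
  let b := Module.Free.chooseBasis R F
  have hmem (v : F) : v - e v ∈ maximalIdeal R • (⊤ : Submodule R F) := by
    rw [← b.sum_repr (v - e v)]
    exact Submodule.sum_mem _ fun i _ => Submodule.smul_mem_smul (h (b.coord i) v) trivial
  rw [← LinearMap.range_eq_top, ← top_le_iff]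
  refine Submodule.le_of_le_smul_of_le_jacobson_bot Module.Finite.fg_top
    (maximalIdeal_le_jacobson _) fun v _ => ?_
  rw [← add_sub_cancel (e v) v]
  exact Submodule.add_mem_sup ⟨v, rfl⟩ (hmem v)

lemma exists_isMinimalFreeApproximation [IsNoetherianRing R] (X : ModuleCat.{u} R)
    [Module.Finite R X] :
    ∃ (F : ModuleCat.{u} R) (ι : X ⟶ F), IsMinimalFreeApproximation ι := by
  classical
  have hex : ∃ (n : ℕ) (F : ModuleCat.{u} R) (ι : X ⟶ F),
      IsFreeApproximation ι ∧ Module.finrank R F = n := by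
    obtain ⟨F, ι, hι⟩ := exists_isFreeApproximation X
    exact ⟨_, F, ι, hι, rfl⟩
  obtain ⟨F, ι, hι, hrank⟩ := Nat.find_spec hex
  have := hι.finite
  have := hι.free
  have hmin (c : Module.Dual R F) (hc : c ∘ₗ ι.hom = 0) (v : F) : c v ∈ maximalIdeal R := by
    by_contra hv
    have hsurj : Function.Surjective c := fun r => by
      obtain ⟨s, hs⟩ := (notMem_maximalIdeal.mp hv).exists_left_inv
      exact ⟨(r * s) • v, by rw [map_smul, smul_eq_mul, mul_assoc, hs, mul_one]⟩
    obtain ⟨K, κ, hκ, hlt⟩ := hι.exists_finrank_lt hsurj hc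
    exact Nat.find_min hex (hrank ▸ hlt) ⟨K, κ, hκ, rfl⟩
  refine ⟨F, ι, hι, fun e he => ?_⟩
  have hsurj : Function.Surjective e.hom := surjective_of_forall_dual_mem_maximalIdeal fun c v =>
    hmin (c ∘ₗ (LinearMap.id - e.hom)) (by
      ext x
      have hx : e.hom (ι.hom x) = ι.hom x := congr(($he).hom x)
      simp [hx]) v
  exact (ConcreteCategory.isIso_iff_bijective e).mpr
    ⟨OrzechProperty.injective_of_surjective_endomorphism e.hom hsurj, hsurj⟩

lemma exists_retract_of_retract_isSyzygy [IsNoetherianRing R] (X : ModuleCat.{u} R)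
    [Module.Finite R X] (n : ℕ) :
    ∃ C : ModuleCat.{u} R, ∀ {U V : ModuleCat.{u} R}, ExtAcyclic U → IsSyzygy U n V →
      ¬ Projective X → Nonempty (Retract X V) → ¬ Projective C ∧ Nonempty (Retract C U) := by
  induction n generalizing X with
  | zero =>
    refine ⟨X, fun _ hV hproj hX => ⟨hproj, ?_⟩⟩
    cases hV
    exact hX
  | succ n ih =>
    obtain ⟨F, ι, hι⟩ := exists_isMinimalFreeApproximation X
    have := hι.finite
    have : Module.Finite R (cokernel ι : ModuleCat R) := .of_surjective (cokernel.π ι).hom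
      ((ModuleCat.epi_iff_surjective _).mp inferInstance)
    obtain ⟨C, hC⟩ := ih (cokernel ι)
    refine ⟨C, fun hU hV hproj hX => ?_⟩
    cases hV with
    | succ hS hfin hfree hV =>
      obtain ⟨hproj', hX'⟩ := hι.retract_cokernel hS (hU.of_isSyzygy hV 0) hproj hX.some
      exact hC hU hV hproj' hX'

end Cosyzygies

section ResidueField

variable {R : Type u} [CommRing R]

lemma IsSyzygy.subsingleton_ext_one {U V B E : ModuleCat.{u} R} {n : ℕ} (hV : IsSyzygy U n V)
    (hE : IsSyzygy B n E) (hU : ExtAcyclic U) (h : Subsingleton (Ext V E 1)) :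
    Subsingleton (Ext U B 1) := by
  induction hV generalizing E with
  | zero =>
    cases hE
    exact h
  | succ hS _ _ hV ih =>
    cases hE with
    | succ hT _ _ hE =>
      exact ih hE <| subsingleton_ext_X₃_right hT
        (subsingleton_ext_free_right (hU.of_isSyzygy hV 0))
        (subsingleton_ext_X₃_left hS h (Ext.subsingleton_of_projective _ _ _))

variable [IsLocalRing R]

lemma lTensor_residueField_injective {M N : Type u} [AddCommGroup M] [Module R M]
    [AddCommGroup N] [Module R N] {f : M →ₗ[R] N}
    (h : ∀ w : M →ₗ[R] ResidueField R, ∃ v : N →ₗ[R] ResidueField R, v ∘ₗ f = w) :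
    Function.Injective (f.lTensor (ResidueField R)) := by
  rw [injective_iff_map_eq_zero]
  intro x hx
  rw [← Module.forall_dual_apply_eq_zero_iff (ResidueField R)]
  intro φ
  obtain ⟨v, hv⟩ := h (φ.restrictScalars R ∘ₗ TensorProduct.mk R (ResidueField R) M 1)
  have hφ : (v.liftBaseChange (ResidueField R)).restrictScalars R ∘ₗ
      f.lTensor (ResidueField R) = φ.restrictScalars R := by
    ext a m
    have hm : v (f m) = φ (1 ⊗ₜ m) := LinearMap.congr_fun hv m
    change a • v (f m) = φ (a ⊗ₜ m)
    rw [hm, ← map_smul, TensorProduct.smul_tmul', smul_eq_mul, mul_one]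
  have := LinearMap.congr_fun hφ x
  simpa [hx] using this.symm

lemma free_of_subsingleton_ext_residueField [IsNoetherianRing R] {U : ModuleCat.{u} R}
    [Module.Finite R U] (h : Subsingleton (Ext U (ModuleCat.of R (ResidueField R)) 1)) :
    Module.Free R U := by
  obtain ⟨S, hS, hfin, hfree, rfl⟩ := exists_shortExact_free U
  have := finite_X₁_of_finite_X₂ hS
  refine Module.free_of_lTensor_residueField_injective S.f.hom S.g.hom hS.moduleCat_surjective_g
    ((ShortComplex.ShortExact.moduleCat_exact_iff_function_exact S).mp hS.exact)
    (lTensor_residueField_injective fun w => ?_)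
  obtain ⟨v, hv⟩ := exists_f_comp_eq hS h (ModuleCat.ofHom w)
  exact ⟨v.hom, congr(($hv).hom)⟩

end ResidueField

section Indecomposable

variable {R : Type} [CommRing R]

lemma Indecomp.nonempty_linearEquiv_of_retract {X U : ModuleCat.{0} R} [Nontrivial X]
    (hU : Indecomp R U) (h : Retract X U) : Nonempty (U ≃ₗ[R] X) := by
  have hir : h.r.hom ∘ₗ h.i.hom = LinearMap.id := congr(($h.retract).hom)
  obtain ⟨e, -⟩ := ((Function.Exact.split_tfae' (LinearMap.exact_subtype_ker_map h.r.hom)).out 0 2 :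
    (_ ∧ ∃ l, h.r.hom ∘ₗ l = LinearMap.id) ↔ _).mp ⟨Subtype.val_injective, _, hir⟩
  rcases hU.2 (ModuleCat.of R (LinearMap.ker h.r.hom)) X ⟨e⟩ with hker | hX
  · refine ⟨.ofBijective h.r.hom ⟨?_, LinearMap.surjective_of_comp_eq_id _ _ hir⟩⟩
    exact LinearMap.ker_eq_bot.mp (Submodule.subsingleton_iff_eq_bot.mp hker)
  · exact absurd hX (not_subsingleton X)

lemma Indecomp.nonempty_linearEquiv_self [Nontrivial R] {U : ModuleCat.{0} R} (hU : Indecomp R U)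
    [Module.Free R U] : Nonempty (U ≃ₗ[R] R) := by
  let b := Module.Free.chooseBasis R U
  have := not_subsingleton_iff_nontrivial.mp hU.1
  obtain ⟨i⟩ := b.index_nonempty
  have hb : b.coord i ∘ₗ LinearMap.toSpanSingleton R U (b i) = LinearMap.id := by
    ext
    simp
  have : Nontrivial (ModuleCat.of R R) := ‹Nontrivial R›
  exact hU.nonempty_linearEquiv_of_retract (X := ModuleCat.of R R)
    ⟨ModuleCat.ofHom _, ModuleCat.ofHom _, congr(ModuleCat.ofHom $hb)⟩

lemma exists_list_linearEquiv_of_retract_isSyzygy [IsLocalRing R] [IsNoetherianRing R]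
    (L : List (ModuleCat.{0} R)) (m : ℕ) :
    ∃ L' : List (ModuleCat.{0} R), ∀ {X U V : ModuleCat.{0} R} {n : ℕ}, X ∈ L →
      Module.Finite R X → ¬ Projective X → n ≤ m → ExtAcyclic U → Indecomp R U → IsSyzygy U n V →
      Nonempty (Retract X V) → ∃ C ∈ L', Nonempty (U ≃ₗ[R] C) := by
  choose! C hC using fun (X : ModuleCat.{0} R) (_ : Module.Finite R X) (n : ℕ) =>
    exists_retract_of_retract_isSyzygy X n
  refine ⟨L.flatMap fun X => (List.range (m + 1)).map (C X),
    fun {X U V n} hXL hfin hX hn hU hind hV hXV => ⟨C X n, ?_, ?_⟩⟩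
  · exact List.mem_flatMap.mpr ⟨X, hXL, List.mem_map_of_mem (List.mem_range.mpr (by omega))⟩
  · obtain ⟨hproj, ⟨hret⟩⟩ := hC X hfin n hU hV hX hXV
    have : Nontrivial (C X n) := not_subsingleton_iff_nontrivial.mp fun _ =>
      hproj (ModuleCat.isZero_of_subsingleton _).projective
    exact hind.nonempty_linearEquiv_of_retract hret

end Indecomposable

section AuslanderReiten

variable {R : Type} [CommRing R]

/-- The Auslander–Reiten relations in `G(CM(R))` given by sequences whose right-hand end belongs
to `L`. -/
def arRelations (L : List (ModuleCat.{0} R)) : Set (GCM R) :=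
  {x | ∃ (X Z Y : CMMod R) (f : (Z.1 : Type) →ₗ[R] (Y.1 : Type))
    (g : (Y.1 : Type) →ₗ[R] (X.1 : Type)), X.1 ∈ L ∧ IsARSequence R f g ∧
    x = gcls R (FreeAbelianGroup.of X + FreeAbelianGroup.of Z - FreeAbelianGroup.of Y)}

lemma arRelations_mono {L L' : List (ModuleCat.{0} R)} (h : L ⊆ L') :
    arRelations L ⊆ arRelations L' := by
  rintro _ ⟨X, Z, Y, f, g, hX, hfg⟩
  exact ⟨X, Z, Y, f, g, h hX, hfg⟩

lemma exists_mem_closure_arRelations {x : GCM R} (hx : x ∈ ARCM R) :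
    ∃ L : List (ModuleCat.{0} R), x ∈ AddSubgroup.closure (arRelations L) := by
  induction hx using AddSubgroup.closure_induction with
  | mem x hx =>
    obtain ⟨X, Z, Y, f, g, h, rfl⟩ := hx
    exact ⟨[X.1], AddSubgroup.subset_closure ⟨X, Z, Y, f, g, List.mem_singleton_self _, h, rfl⟩⟩
  | zero => exact ⟨[], zero_mem _⟩
  | add x y _ _ hx hy =>
    obtain ⟨L, hL⟩ := hx
    obtain ⟨L', hL'⟩ := hy
    exact ⟨L ++ L', add_mem
      (AddSubgroup.closure_mono (arRelations_mono (List.subset_append_left L L')) hL)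
      (AddSubgroup.closure_mono (arRelations_mono (List.subset_append_right L L')) hL')⟩
  | neg x _ hx =>
    obtain ⟨L, hL⟩ := hx
    exact ⟨L, neg_mem hL⟩

lemma relationClass_mem_exCM {S : ShortComplex (ModuleCat.{0} R)} (hS : S.ShortExact)
    (h₁ : IsMCM R S.X₁) (h₂ : IsMCM R S.X₂) (h₃ : IsMCM R S.X₃) :
    relationClass h₁ h₂ h₃ ∈ ExCM R :=
  AddSubgroup.subset_closure ⟨⟨S.X₃, h₃⟩, ⟨S.X₁, h₁⟩, ⟨S.X₂, h₂⟩, S.f.hom, S.g.hom,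
    hS.moduleCat_injective_f, hS.moduleCat_surjective_g,
    (ShortComplex.ShortExact.moduleCat_exact_iff_function_exact S).mp hS.exact, rfl⟩

lemma subsingleton_ext_of_extLengthHom_eq_zero {V : ModuleCat.{0} R} [Module.Finite R V]
    (hV : ExtAcyclic V) (hfin : HasFiniteExtLength V) {S : ShortComplex (ModuleCat.{0} R)}
    [Module.Free R S.X₂] {h₁ : IsMCM R S.X₁} {h₂ : IsMCM R S.X₂} {h₃ : IsMCM R S.X₃}
    (h : extLengthHom V hfin (relationClass h₁ h₂ h₃) = 0) :
    Subsingleton (Ext V S.X₃ 1) := by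
  have := h₂.1
  have := h₃.1
  have hfree : extLength V S.X₂ = 0 :=
    (extLength_eq_zero_iff (hfin _)).mpr (subsingleton_ext_free_right (hV 0))
  rw [extLengthHom_relationClass, hfree] at h
  rw [← extLength_eq_zero_iff (hfin _)]
  linarith [extLength_nonneg V S.X₁, extLength_nonneg V S.X₃]

lemma IsARSequence.exists_comp_eq_of_isEmpty_retract {Z Y X W : ModuleCat.{0} R} {f : Z →ₗ[R] Y}
    {g : Y →ₗ[R] X} (h : IsARSequence R f g) [Module.Finite R W] (hW : IsEmpty (Retract X W))
    (u : W ⟶ X) : ∃ v : W ⟶ Y, v ≫ ModuleCat.ofHom g = u := by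
  obtain ⟨-, -, -, -, -, -, -, -, -, -, -, hlift⟩ := h
  obtain ⟨v, hv⟩ := hlift W u.hom inferInstance fun ⟨s, hs⟩ =>
    hW.false ⟨ModuleCat.ofHom s, u, ModuleCat.hom_ext hs⟩
  exact ⟨ModuleCat.ofHom v, ModuleCat.hom_ext hv⟩

variable [IsLocalRing R] [IsNoetherianRing R] {L : List (ModuleCat.{0} R)}

lemma extLengthHom_eq_zero_of_mem_closure_arRelations {T : ShortComplex (ModuleCat.{0} R)}
    (hT : T.ShortExact) [Module.Finite R T.X₂] [Module.Free R T.X₂] [Module.Finite R T.X₃]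
    (hfin : HasFiniteExtLength T.X₃)
    (h : ∀ X ∈ L, Module.Finite R X → ¬ Projective X →
      IsEmpty (Retract X T.X₁) ∧ IsEmpty (Retract X T.X₃))
    {x : GCM R} (hx : x ∈ AddSubgroup.closure (arRelations L)) :
    extLengthHom T.X₃ hfin x = 0 := by
  have := finite_X₁_of_finite_X₂ hT
  suffices AddSubgroup.closure (arRelations L) ≤ (extLengthHom T.X₃ hfin).ker from this hx
  rw [AddSubgroup.closure_le]
  rintro _ ⟨X, Z, Y, f, g, hXL, har, rfl⟩
  obtain ⟨hZfin, -, hXfin, hf, hg, hfg, -, -, -, -, hXfree, -⟩ := id har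
  have hX : ¬ Projective X.1 := fun hproj => hXfree <|
    have := (IsProjective.iff_projective X.1).mpr hproj
    Module.free_of_flat_of_isLocalRing
  obtain ⟨hX₁, hX₃⟩ := h X.1 hXL hXfin hX
  rw [SetLike.mem_coe, AddMonoidHom.mem_ker, extLengthHom_gcls]
  exact extLength_X₃_add_X₁_sub_X₂ (S := ModuleCat.shortComplexOfCompEqZero f g _) hfin
    (shortExact_of_injective_of_surjective_of_exact hf hg hfg) hT
    (har.exists_comp_eq_of_isEmpty_retract hX₁) (har.exists_comp_eq_of_isEmpty_retract hX₃)

lemma free_or_exists_retract_isSyzygy (hsing : IsolatedSingularity R) {d : ℕ}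
    (hd : ringKrullDim R = d) {S : ShortComplex (ModuleCat.{0} R)} [Module.Free R S.X₂]
    (hk : IsSyzygy (ModuleCat.of R (ResidueField R)) d S.X₃) {h₁ : IsMCM R S.X₁}
    {h₂ : IsMCM R S.X₂} {h₃ : IsMCM R S.X₃}
    (hL : relationClass h₁ h₂ h₃ ∈ AddSubgroup.closure (arRelations L))
    {U : ModuleCat.{0} R} [Module.Finite R U] (hU : ExtAcyclic U) :
    Module.Free R U ∨ ∃ X ∈ L, Module.Finite R X ∧ ¬ Projective X ∧
      ∃ n ≤ d + 1, ∃ V, IsSyzygy U n V ∧ Nonempty (Retract X V) := by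
  by_contra! ⟨hfree, hret⟩
  obtain ⟨V, hV⟩ := IsSyzygy.exists_of_finite U d
  have := hV.finite
  obtain ⟨T, hT, _, _, rfl⟩ := exists_shortExact_free V
  have hfin : HasFiniteExtLength T.X₃ := fun M _ => hV.length_ext_ne_top hsing hd M
  have hzero := extLengthHom_eq_zero_of_mem_closure_arRelations hT hfin (fun X hXL hX hproj =>
    ⟨hret X hXL hX hproj (d + 1) le_rfl _ (.succ hT ‹_› ‹_› hV),
      hret X hXL hX hproj d d.le_succ _ hV⟩) hL
  have hext := subsingleton_ext_of_extLengthHom_eq_zero (hU.of_isSyzygy hV) hfin hzero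
  exact hfree (free_of_subsingleton_ext_residueField (hV.subsingleton_ext_one hk hU hext))

end AuslanderReiten

/-- Hiramatsu's theorem. Let `(R, m, k)` be a Gorenstein local ring with an
isolated singularity. If `Ex(CM(R)) = AR(CM(R))`, then `R` is of finite CM type. -/
theorem finiteCMType_of_ex_eq_ar_of_gorenstein
    (R : Type) [CommRing R] (hGor : IsGorensteinLocal R) (hsing : IsolatedSingularity R)
    (h : ExCM R = ARCM R) :
    FiniteCMType R := by
  obtain ⟨_, _, n, hn⟩ := hGor
  have := hn.hasInjectiveDimensionLT
  obtain ⟨d, hd⟩ := exists_ringKrullDim_eq_natCast R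
  by_cases hex : ∃ U : ModuleCat.{0} R, IsMCM R U ∧ Nontrivial U
  swap
  · exact ⟨[], fun U hU hind => (hex ⟨U, hU, not_subsingleton_iff_nontrivial.mp hind.1⟩).elim⟩
  obtain ⟨U, hU, _⟩ := hex
  obtain ⟨rs, hrs, rfl⟩ := hU.exists_isRegular_self (n + 1) hd
  obtain ⟨S, hS, _, hE, h₁, h₂, h₃⟩ :=
    exists_shortExact_isSyzygy_isMCM hrs hd (ModuleCat.of R (ResidueField R))
  obtain ⟨L, hL⟩ := exists_mem_closure_arRelations (h ▸ relationClass_mem_exCM hS h₁ h₂ h₃)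
  obtain ⟨L', hL'⟩ := exists_list_linearEquiv_of_retract_isSyzygy L (rs.length + 1)
  refine ⟨ModuleCat.of R R :: L', fun U hU hind => ?_⟩
  have := hU.1
  have hacyc : ExtAcyclic U := hU.subsingleton_ext_self (n + 1)
  rcases free_or_exists_retract_isSyzygy hsing hd hE hL hacyc with
    hfree | ⟨X, hXL, hXfin, hX, j, hj, V, hV, hXV⟩
  · exact ⟨_, List.mem_cons_self, hind.nonempty_linearEquiv_self⟩
  · obtain ⟨C, hC, hUC⟩ := hL' hXL hXfin hX hj hacyc hind hV hXV
    exact ⟨C, List.mem_cons_of_mem _ hC, hUC⟩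

end Paper
end

section
/- Let R be a Noetherian local ring, let 0 → A → B → C → 0 be a short exact sequence of finitely generated R-modules, and let U be a finitely generated R-module. Then there exists an exact sequence of R-modules stHom_R(U, ΩA) → stHom_R(U, ΩB) → stHom_R(U, ΩC) → stHom_R(U, A) → stHom_R(U, B) → stHom_R(U, C), where the last two maps are induced by the given maps A → B and B → C. -/
/-!
Common definitions: Cohen-Macaulay modules, isolated singularities, stable Hom,
syzygies, transposes, Auslander-Reiten sequences, and the Grothendieck-type groups
`G(CM(R))`, `Ex(CM(R))`, `AR(CM(R))` from the paper
"Syzygies of Cohen-Macaulay modules and Grothendieck groups".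

Throughout, the maximal ideal of a local ring is realized as the Jacobson radical
`(⊥ : Ideal R).jacobson` (for a local ring these coincide), which lets the definitions
make sense without a `IsLocalRing` instance argument.
-/

namespace Paper

/-!
A short exact sequence `0 → A → B → C → 0` makes `stHom(U, A) → stHom(U, B) → stHom(U, C)` exact,
because a map into `C` that factors through a free module lifts to such a map into `B`. Pulling the
sequence back along a surjection `P → C` with `P` finitely generated projective rotates it to
`0 → ΩC → A × P → B → 0`, and the factor `P` is invisible to stable Hom. Three rotations, along
surjections onto `C`, `B` and `A × P`, give the remaining three exact places.
-/

/-- Short exactness of `0 → A → B → C → 0` for unbundled linear maps `A → B` and `B → C`. It serves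
both for the given sequence and for the presentations `0 → ΩC → P → C → 0`. -/
structure IsShortExact {R A B C : Type*} [Ring R] [AddCommGroup A] [Module R A] [AddCommGroup B]
    [Module R B] [AddCommGroup C] [Module R C] (f : A →ₗ[R] B) (g : B →ₗ[R] C) : Prop where
  injective : Function.Injective f
  exact : Function.Exact f g
  surjective : Function.Surjective g

namespace IsShortExact

variable {R A B C K P : Type*} [Ring R] [AddCommGroup A] [Module R A] [AddCommGroup B] [Module R B]
  [AddCommGroup C] [Module R C] [AddCommGroup K] [Module R K] [AddCommGroup P] [Module R P]
  {f : A →ₗ[R] B} {g : B →ₗ[R] C} {ι : K →ₗ[R] P} {p : P →ₗ[R] C}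

theorem subtype_ker (hp : Function.Surjective p) : IsShortExact (LinearMap.ker p).subtype p :=
  ⟨Submodule.injective_subtype _, LinearMap.exact_subtype_ker_map p, hp⟩

theorem inl_comp_prodMap_id (h : IsShortExact f g) (Q : Type*) [AddCommGroup Q] [Module R Q] :
    IsShortExact (LinearMap.inl R B Q ∘ₗ f) (g.prodMap (LinearMap.id : Q →ₗ[R] Q)) where
  injective := LinearMap.inl_injective.comp h.injective
  exact := by
    rintro ⟨b, q⟩
    simp [h.exact b, eq_comm (b := q)]
  surjective := h.surjective.prodMap Function.surjective_id

theorem exists_comp_eq (h : IsShortExact f g) {X : Type*} [AddCommGroup X] [Module R X]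
    (β : X →ₗ[R] B) (hβ : g ∘ₗ β = 0) : ∃ α : X →ₗ[R] A, f ∘ₗ α = β := by
  have β_mem_range (x : X) : β x ∈ LinearMap.range f :=
    (h.exact (β x)).1 (LinearMap.congr_fun hβ x)
  refine ⟨(LinearEquiv.ofInjective f h.injective).symm ∘ₗ β.codRestrict _ β_mem_range, ?_⟩
  ext x
  simp

theorem exists_rotate [Module.Projective R P] (h : IsShortExact f g) (hp : IsShortExact ι p) :
    ∃ (δ : K →ₗ[R] A) (s : P →ₗ[R] B), IsShortExact (δ.prod ι) (f.coprod s) := by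
  -- The sign makes `f ∘ δ + s ∘ ι` vanish, so that `f.coprod s` needs none.
  obtain ⟨s, hs⟩ := Module.projective_lifting_property g (-p) h.surjective
  have g_s (q : P) : g (s q) = -p q := LinearMap.congr_fun hs q
  obtain ⟨δ, hδ⟩ := h.exists_comp_eq (-(s ∘ₗ ι)) (by
    ext k
    simp [g_s, hp.exact.apply_apply_eq_zero])
  have f_δ (k : K) : f (δ k) = -s (ι k) := LinearMap.congr_fun hδ k
  refine ⟨δ, s, fun k k' hkk' => hp.injective (congrArg Prod.snd hkk'), ?_, fun b => ?_⟩
  · rintro ⟨a, q⟩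
    constructor
    · intro haq
      have f_a : f a = -s q := eq_neg_of_add_eq_zero_left haq
      have p_q : p q = 0 := by
        simpa [g_s, h.exact.apply_apply_eq_zero] using (congrArg g f_a).symm
      obtain ⟨k, rfl⟩ := (hp.exact q).1 p_q
      exact ⟨k, Prod.ext (h.injective ((f_δ k).trans f_a.symm)) rfl⟩
    · rintro ⟨k, hk⟩
      simp [← hk, f_δ]
  · obtain ⟨q, hq⟩ := hp.surjective (-g b)
    obtain ⟨a, ha⟩ := (h.exact (b - s q)).1 (by simp [g_s, hq])
    exact ⟨(a, q), by simp [ha]⟩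

end IsShortExact

section StableHom

variable {R : Type} [CommRing R] {U M N N' P : Type} [AddCommGroup U] [Module R U]
  [AddCommGroup M] [Module R M] [AddCommGroup N] [Module R N] [AddCommGroup N'] [Module R N']
  [AddCommGroup P] [Module R P]

theorem stSub_le_map_llcomp {g : M →ₗ[R] N} (hg : Function.Surjective g) :
    stSub R U N ≤ (stSub R U M).map (LinearMap.llcomp R U M N g) := by
  rw [stSub, Submodule.span_le]
  rintro _ ⟨n, k, h, rfl⟩
  obtain ⟨l, rfl⟩ := Module.projective_lifting_property g h hg
  exact ⟨l ∘ₗ k, Submodule.subset_span ⟨n, k, l, rfl⟩, rfl⟩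

theorem stSub_eq_top [Module.Finite R P] [Module.Projective R P] : stSub R U P = ⊤ := by
  refine eq_top_iff.2 fun φ _ => ?_
  obtain ⟨n, π, σ, -, -, hπσ⟩ := Module.Finite.exists_comp_eq_id_of_projective R P
  exact Submodule.subset_span
    ⟨n, σ ∘ₗ φ, π, by rw [← LinearMap.comp_assoc, hπσ, LinearMap.id_comp]⟩

instance subsingleton_stHom [Module.Finite R P] [Module.Projective R P] :
    Subsingleton (StHom R U P) :=
  Submodule.Quotient.subsingleton_iff.2 stSub_eq_top

theorem stMapLeft_id : stMapLeft R (M := U) (LinearMap.id : N →ₗ[R] N) = LinearMap.id :=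
  Submodule.linearMap_qext _ rfl

theorem stMapLeft_zero : stMapLeft R (M := U) (0 : M →ₗ[R] N) = 0 :=
  Submodule.linearMap_qext _ rfl

theorem stMapLeft_add (φ ψ : M →ₗ[R] N) :
    stMapLeft R (M := U) (φ + ψ) = stMapLeft R φ + stMapLeft R ψ :=
  Submodule.linearMap_qext _ rfl

theorem stMapLeft_comp (ψ : N →ₗ[R] N') (φ : M →ₗ[R] N) :
    stMapLeft R (M := U) (ψ ∘ₗ φ) = stMapLeft R ψ ∘ₗ stMapLeft R φ :=
  Submodule.linearMap_qext _ rfl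

theorem stMapLeft_inl_comp_fst [Module.Finite R P] [Module.Projective R P] :
    stMapLeft R (M := U) (LinearMap.inl R N P ∘ₗ LinearMap.fst R N P) = LinearMap.id := by
  have stMapLeft_inr_comp_snd :
      stMapLeft R (M := U) (LinearMap.inr R N P ∘ₗ LinearMap.snd R N P) = 0 := by
    rw [stMapLeft_comp, Subsingleton.elim (stMapLeft R (LinearMap.snd R N P)) 0,
      LinearMap.comp_zero]
  have id_eq : LinearMap.inl R N P ∘ₗ LinearMap.fst R N P +
      LinearMap.inr R N P ∘ₗ LinearMap.snd R N P = LinearMap.id := by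
    ext <;> simp
  rw [← stMapLeft_id, ← id_eq, stMapLeft_add, stMapLeft_inr_comp_snd, add_zero]

variable (R U N P) in
/-- The isomorphism `stHom(U, N × P) ≃ stHom(U, N)` induced by the first projection, for a finitely
generated projective module `P`; its inverse is induced by `N → N × P`. -/
def stHomProdEquiv [Module.Finite R P] [Module.Projective R P] :
    StHom R U (N × P) ≃ₗ[R] StHom R U N :=
  LinearEquiv.ofLinearMap (stMapLeft R (LinearMap.fst R N P)) (stMapLeft R (LinearMap.inl R N P))
    (by rw [← stMapLeft_comp, LinearMap.fst_comp_inl, stMapLeft_id])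
    (by rw [← stMapLeft_comp, stMapLeft_inl_comp_fst])

theorem stHomProdEquiv_comp_stMapLeft_prod [Module.Finite R P] [Module.Projective R P]
    (φ : M →ₗ[R] N) (ε : M →ₗ[R] P) :
    (stHomProdEquiv R U N P).toLinearMap ∘ₗ stMapLeft R (φ.prod ε) = stMapLeft R φ :=
  calc
    _ = stMapLeft R (LinearMap.fst R N P ∘ₗ φ.prod ε) := (stMapLeft_comp ..).symm
    _ = stMapLeft R φ := by rw [LinearMap.fst_prod]

theorem stMapLeft_coprod_comp_stHomProdEquiv_symm [Module.Finite R P] [Module.Projective R P]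
    (φ : N →ₗ[R] M) (s : P →ₗ[R] M) :
    stMapLeft R (φ.coprod s) ∘ₗ (stHomProdEquiv R U N P).symm.toLinearMap = stMapLeft R φ :=
  calc
    _ = stMapLeft R (φ.coprod s ∘ₗ LinearMap.inl R N P) := (stMapLeft_comp ..).symm
    _ = stMapLeft R φ := by rw [LinearMap.coprod_inl]

theorem exact_stMapLeft_prod_iff [Module.Finite R P] [Module.Projective R P] {φ : M →ₗ[R] N}
    {ψ : N →ₗ[R] N'} {ε : N →ₗ[R] P} :
    Function.Exact (stMapLeft R (M := U) φ) (stMapLeft R (M := U) (ψ.prod ε)) ↔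
      Function.Exact (stMapLeft R (M := U) φ) (stMapLeft R (M := U) ψ) := by
  rw [← stHomProdEquiv_comp_stMapLeft_prod ψ ε, LinearEquiv.postcomp_exact_iff_exact]

theorem IsShortExact.exact_stMapLeft {f : M →ₗ[R] N} {g : N →ₗ[R] N'} (h : IsShortExact f g) :
    Function.Exact (stMapLeft R (M := U) f) (stMapLeft R (M := U) g) := by
  refine LinearMap.exact_of_comp_eq_zero_of_ker_le_range ?_ fun y hy => ?_
  · rw [← stMapLeft_comp, h.exact.linearMap_comp_eq_zero, stMapLeft_zero]
  · obtain ⟨β, rfl⟩ := Submodule.Quotient.mk_surjective _ y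
    have g_β_mem : g ∘ₗ β ∈ stSub R U N' := (Submodule.Quotient.mk_eq_zero _).1 hy
    obtain ⟨θ, θ_mem, (hθ : g ∘ₗ θ = g ∘ₗ β)⟩ := stSub_le_map_llcomp h.surjective g_β_mem
    obtain ⟨α, hα⟩ := h.exists_comp_eq (β - θ) (by rw [LinearMap.comp_sub, hθ, sub_self])
    have f_α_sub_β_mem : f ∘ₗ α - β ∈ stSub R U N := by
      rw [hα, sub_sub_cancel_left]
      exact neg_mem θ_mem
    exact ⟨Submodule.Quotient.mk α, (Submodule.Quotient.eq _).2 f_α_sub_β_mem⟩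

theorem IsShortExact.exact_stMapLeft_of_prod_coprod [Module.Finite R P] [Module.Projective R P]
    {φ : M →ₗ[R] N} {ε : M →ₗ[R] P} {ψ : N →ₗ[R] N'} {s : P →ₗ[R] N'}
    (h : IsShortExact (φ.prod ε) (ψ.coprod s)) :
    Function.Exact (stMapLeft R (M := U) φ) (stMapLeft R (M := U) ψ) := by
  rw [← stHomProdEquiv_comp_stMapLeft_prod φ ε, ← stMapLeft_coprod_comp_stHomProdEquiv_symm ψ s,
    LinearEquiv.conj_exact_iff_exact]
  exact h.exact_stMapLeft

theorem exact_stHom_syzygy_sequence_general {A B C KA KB KC PA PB PC : Type}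
    [AddCommGroup A] [Module R A] [AddCommGroup B] [Module R B] [AddCommGroup C] [Module R C]
    [AddCommGroup KA] [Module R KA] [AddCommGroup KB] [Module R KB] [AddCommGroup KC] [Module R KC]
    [AddCommGroup PA] [Module R PA] [Module.Finite R PA] [Module.Projective R PA]
    [AddCommGroup PB] [Module R PB] [Module.Finite R PB] [Module.Projective R PB]
    [AddCommGroup PC] [Module R PC] [Module.Finite R PC] [Module.Projective R PC]
    {f : A →ₗ[R] B} {g : B →ₗ[R] C} (h : IsShortExact f g)
    {ιA : KA →ₗ[R] PA} {pA : PA →ₗ[R] A} (hA : IsShortExact ιA pA)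
    {ιB : KB →ₗ[R] PB} {pB : PB →ₗ[R] B} (hB : IsShortExact ιB pB)
    {ιC : KC →ₗ[R] PC} {pC : PC →ₗ[R] C} (hC : IsShortExact ιC pC) :
    ∃ (φ : KA →ₗ[R] KB) (ψ : KB →ₗ[R] KC) (δ : KC →ₗ[R] A),
      ∀ (U : Type) [AddCommGroup U] [Module R U],
        Function.Exact (stMapLeft R (M := U) φ) (stMapLeft R (M := U) ψ) ∧
        Function.Exact (stMapLeft R (M := U) ψ) (stMapLeft R (M := U) δ) ∧
        Function.Exact (stMapLeft R (M := U) δ) (stMapLeft R (M := U) f) ∧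
        Function.Exact (stMapLeft R (M := U) f) (stMapLeft R (M := U) g) := by
  obtain ⟨δ, s, hδ⟩ := h.exists_rotate hC
  obtain ⟨ψ, t, hψ⟩ := hδ.exists_rotate hB
  obtain ⟨φ, u, hφ⟩ := hψ.exists_rotate (hA.inl_comp_prodMap_id PC)
  exact ⟨φ, ψ, δ, fun U _ _ =>
    ⟨exact_stMapLeft_prod_iff.1 hφ.exact_stMapLeft_of_prod_coprod,
      exact_stMapLeft_prod_iff.1 hψ.exact_stMapLeft_of_prod_coprod,
      hδ.exact_stMapLeft_of_prod_coprod, h.exact_stMapLeft⟩⟩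

end StableHom

/-- Lemma 2.2. Given a short exact sequence `0 → A → B → C → 0` of finitely
generated modules over a Noetherian local ring and a finitely generated module `U`, there is an
exact sequence
`stHom(U,ΩA) → stHom(U,ΩB) → stHom(U,ΩC) → stHom(U,A) → stHom(U,B) → stHom(U,C)`,
the last two maps being induced by `f : A → B` and `g : B → C`. -/
theorem exact_stHom_syzygy_sequence
    (R : Type) [CommRing R] [IsNoetherianRing R] [IsLocalRing R]
    (A B C U : Type) [AddCommGroup A] [Module R A] [AddCommGroup B] [Module R B]
    [AddCommGroup C] [Module R C] [AddCommGroup U] [Module R U]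
    (hA : Module.Finite R A) (hB : Module.Finite R B) (hC : Module.Finite R C)
    (hU : Module.Finite R U)
    (f : A →ₗ[R] B) (g : B →ₗ[R] C) (hf : Function.Injective f)
    (hg : Function.Surjective g) (hfg : Function.Exact f g)
    (DA : SyzData R A) (DB : SyzData R B) (DC : SyzData R C) :
    ∃ (d₁ : StHom R U (SyzOf R DA) →ₗ[R] StHom R U (SyzOf R DB))
      (d₂ : StHom R U (SyzOf R DB) →ₗ[R] StHom R U (SyzOf R DC))
      (d₃ : StHom R U (SyzOf R DC) →ₗ[R] StHom R U A),
      Function.Exact d₁ d₂ ∧ Function.Exact d₂ d₃ ∧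
      Function.Exact d₃ (stMapLeft R (M := U) f) ∧
      Function.Exact (stMapLeft R (M := U) f) (stMapLeft R (M := U) g) := by
  obtain ⟨φ, ψ, δ, hexact⟩ := exact_stHom_syzygy_sequence_general ⟨hf, hfg, hg⟩
    (.subtype_ker DA.surj) (.subtype_ker DB.surj) (.subtype_ker DC.surj)
  exact ⟨stMapLeft R φ, stMapLeft R ψ, stMapLeft R δ, hexact U⟩

end Paper
end
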